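/- Let (X,ρ,μ) be a space of homogeneous type satisfying the weak reverse doubling (WRD) condition, let Ω ⊆ X be an open set satisfying the weak measure density (WMD) condition, let 0 < q ≤ p ≤ r < ∞, and let ω be an A_{r/p}(X)-weight (an A₁(X)-weight when r = p). Then there exist positive constants C and C̃ such that for every measurable f on Ω with inf_{a∈ℝ} ‖f+a‖_{L^r_ω(Ω)} < ∞ and with ‖(∫_Ω |f(·)−f(y)|^q/(U(·,y)·ρ(·,y)^{s₀q}) dμ(y))^{1/q}‖_{L^r_ω(Ω)} < ∞ for some s₀ ∈ (0,1), one has C·inf_{a∈ℝ}‖f+a‖_{L^r_ω(Ω)} ≤ liminf_{s→0⁺} s^{1/q}‖(∫_Ω |f(·)−f(y)|^q/(U(·,y)·ρ(·,y)^{sq}) dμ(y))^{1/q}‖_{L^r_ω(Ω)} ≤ limsup_{s→0⁺} s^{1/q}‖(∫_Ω |f(·)−f(y)|^q/(U(·,y)·ρ(·,y)^{sq}) dμ(y))^{1/q}‖_{L^r_ω(Ω)} ≤ C̃·inf_{a∈ℝ}‖f+a‖_{L^r_ω(Ω)}. -/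

import Mathlib

noncomputable section

open MeasureTheory Filter Set
open scoped ENNReal NNReal Topology

namespace Paper

variable {X : Type*} [MeasurableSpace X]

/-- The ball with center `x` and radius `r` for the quasi-metric `ρ`. -/
def ball (ρ : X → X → ℝ) (x : X) (r : ℝ) : Set X := {y | ρ x y < r}

/-- `(X, ρ, μ)` is a quasi-metric measure space with quasi-triangle constant `K₀`:
`ρ` is a quasi-metric with constant `K₀` and all `ρ`-balls are `μ`-measurable. -/
structure IsQuasiMetricMeasure (ρ : X → X → ℝ) (μ : Measure X) (K₀ : ℝ) : Prop where
  nonneg : ∀ x y, 0 ≤ ρ x y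
  eq_zero_iff : ∀ x y, ρ x y = 0 ↔ x = y
  symm : ∀ x y, ρ x y = ρ y x
  one_le : 1 ≤ K₀
  triangle : ∀ x y z, ρ x z ≤ K₀ * (ρ x y + ρ y z)
  measurableSet_ball : ∀ x r, MeasurableSet (ball ρ x r)

/-- The doubling condition for `μ` with doubling constant `L ∈ [1, ∞)`. -/
def IsDoubling (ρ : X → X → ℝ) (μ : Measure X) (L : ℝ≥0∞) : Prop :=
  1 ≤ L ∧ L < ∞ ∧ ∀ (x : X) (r : ℝ), 0 < r →
    0 < μ (ball ρ x r) ∧ μ (ball ρ x (2 * r)) ≤ L * μ (ball ρ x r) ∧ μ (ball ρ x r) < ∞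

/-- `U(x,y) := min{μ(B(x,ρ(x,y))), μ(B(y,ρ(x,y)))}`. -/
def U (ρ : X → X → ℝ) (μ : Measure X) (x y : X) : ℝ≥0∞ :=
  min (μ (ball ρ x (ρ x y))) (μ (ball ρ y (ρ x y)))

/-- The weak reverse doubling (WRD) condition. -/
def WRD (ρ : X → X → ℝ) (μ : Measure X) : Prop :=
  ∃ (x₀ : X) (lam C : ℝ), 1 < lam ∧ 1 < C ∧
    ENNReal.ofReal C ≤
      liminf (fun r : ℝ => μ (ball ρ x₀ (lam * r)) / μ (ball ρ x₀ r)) atTop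

/-- The weak measure density (WMD) condition for `Ω`. -/
def WMD (ρ : X → X → ℝ) (μ : Measure X) (Ω : Set X) : Prop :=
  ∃ (x₀ : X) (C₀ : ℝ), 0 < C₀ ∧ C₀ ≤ 1 ∧
    ENNReal.ofReal C₀ ≤
      liminf (fun r : ℝ => μ (ball ρ x₀ r ∩ Ω) / μ (ball ρ x₀ r)) atTop

/-- `Ω` is open with respect to the quasi-metric `ρ`. -/
def IsRhoOpen (ρ : X → X → ℝ) (Ω : Set X) : Prop :=
  ∀ x ∈ Ω, ∃ r : ℝ, 0 < r ∧ ball ρ x r ⊆ Ω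

/-- The Maz'ya–Shaposhnikova integrand on a set `E`:
`x ↦ (∫_E |f(x) − f(y)|^q / (U(x,y) ρ(x,y)^{sq}) dμ(y))^{1/q}`. -/
def sob (ρ : X → X → ℝ) (μ : Measure X) (E : Set X) (f : X → ℝ) (q s : ℝ) (x : X) :
    ℝ≥0∞ :=
  (∫⁻ y in E, ENNReal.ofReal |f x - f y| ^ q /
      (U ρ μ x y * ENNReal.ofReal (ρ x y) ^ (s * q)) ∂μ) ^ (1 / q)

/-- The `A₁(X)` characteristic of a weight `ω`. -/
def A1Const (ρ : X → X → ℝ) (μ : Measure X) (ω : X → ℝ≥0∞) : ℝ≥0∞ :=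
  ⨆ (x : X) (r : ℝ) (_ : 0 < r),
    ((∫⁻ y in ball ρ x r, ω y ∂μ) / μ (ball ρ x r)) /
      essInf ω (μ.restrict (ball ρ x r))

/-- The `A_t(X)` characteristic, `t ∈ (1,∞)`, of a weight `ω`. -/
def ApConst (ρ : X → X → ℝ) (μ : Measure X) (ω : X → ℝ≥0∞) (t : ℝ) : ℝ≥0∞ :=
  ⨆ (x : X) (r : ℝ) (_ : 0 < r),
    ((∫⁻ y in ball ρ x r, ω y ∂μ) / μ (ball ρ x r)) *
      ((∫⁻ y in ball ρ x r, ω y ^ (1 / (1 - t)) ∂μ) / μ (ball ρ x r)) ^ (t - 1)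

/-- The weighted Lebesgue quasi-norm `(∫_E g^p ω dμ)^{1/p}` of an
`ℝ≥0∞`-valued function `g`. -/
def wnorm (μ : Measure X) (ω : X → ℝ≥0∞) (p : ℝ) (E : Set X) (g : X → ℝ≥0∞) :
    ℝ≥0∞ :=
  (∫⁻ x in E, g x ^ p * ω x ∂μ) ^ (1 / p)


lemma ball_mono (ρ : X → X → ℝ) (x : X) {r s : ℝ} (h : r ≤ s) : ball ρ x r ⊆ ball ρ x s :=
  fun _ hy => lt_of_lt_of_le hy h

/-- averaging form of the Muckenhoupt condition -/
def PC (ρ : X → X → ℝ) (μ : Measure X) (ω : X → ℝ≥0∞) (t : ℝ) (C : ℝ≥0∞) : Prop :=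
  ∀ (x : X) (R : ℝ), 0 < R → ∀ h : X → ℝ≥0∞, Measurable h →
    (∫⁻ y in ball ρ x R, h y ∂μ) ^ t * (∫⁻ y in ball ρ x R, ω y ∂μ) ≤
      C * μ (ball ρ x R) ^ t * ∫⁻ y in ball ρ x R, h y ^ t * ω y ∂μ

lemma holder_pow {Y : Type*} [MeasurableSpace Y] (ν : Measure Y) (f g : Y → ℝ≥0∞)
    (hf : AEMeasurable f ν) (hg : AEMeasurable g ν) {t : ℝ} (ht : 1 < t) :
    (∫⁻ y, f y * g y ∂ν) ^ t ≤ (∫⁻ y, f y ^ t ∂ν) * (∫⁻ y, g y ^ (t / (t - 1)) ∂ν) ^ (t - 1) := by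
  have hc : t.HolderConjugate (t / (t - 1)) := Real.HolderConjugate.conjExponent ht
  have h := ENNReal.lintegral_mul_le_Lp_mul_Lq ν hc hf hg
  have ht0 : 0 < t := by linarith
  have h2 := ENNReal.rpow_le_rpow h ht0.le
  rw [ENNReal.mul_rpow_of_nonneg _ _ ht0.le, ← ENNReal.rpow_mul, ← ENNReal.rpow_mul] at h2
  have e1 : 1 / t * t = 1 := by field_simp
  have e2 : 1 / (t / (t - 1)) * t = t - 1 := by
    have : t - 1 ≠ 0 := by linarith
    field_simp
  rw [e1, e2, ENNReal.rpow_one] at h2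
  exact h2

lemma jensen {Y : Type*} [MeasurableSpace Y] (ν : Measure Y) (h : Y → ℝ≥0∞)
    (hm : AEMeasurable h ν) {t : ℝ} (ht : 1 ≤ t) :
    (∫⁻ y, h y ∂ν) ^ t ≤ ν univ ^ (t - 1) * ∫⁻ y, h y ^ t ∂ν := by
  rcases eq_or_lt_of_le ht with rfl | ht1
  · simp
  · have := holder_pow ν h (fun _ => 1) hm aemeasurable_const ht1
    simp only [mul_one, ENNReal.one_rpow, lintegral_const, one_mul] at this
    rwa [mul_comm]

lemma jensen_tsum (a T : ℕ → ℝ≥0∞) {t : ℝ} (ht : 1 ≤ t) :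
    (∑' k, a k * T k) ^ t ≤ (∑' k, a k) ^ (t - 1) * ∑' k, a k * T k ^ t := by
  have := jensen (Measure.sum fun k : ℕ => a k • Measure.dirac k) T
    (measurable_of_countable T).aemeasurable ht
  simpa [lintegral_sum_measure, lintegral_smul_measure, Measure.sum_apply] using this

lemma PC.mono {ρ : X → X → ℝ} {μ : Measure X} {ω : X → ℝ≥0∞} {t t' : ℝ} {C : ℝ≥0∞}
    (h : PC ρ μ ω t C) (ht : 0 < t) (htt : t ≤ t') : PC ρ μ ω t' C := by
  intro x R hR g hg
  have hu : 1 ≤ t' / t := by rwa [le_div_iff₀ ht, one_mul]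
  have e : t' / t * t = t' := by field_simp
  set B := ball ρ x R
  have hj := jensen (μ.restrict B) g hg.aemeasurable hu
  have hp := h x R hR (fun y => g y ^ (t' / t)) (hg.pow_const _)
  simp only [← ENNReal.rpow_mul, e] at hp
  rw [Measure.restrict_apply_univ] at hj
  calc (∫⁻ y in B, g y ∂μ) ^ t' * ∫⁻ y in B, ω y ∂μ
      = ((∫⁻ y in B, g y ∂μ) ^ (t' / t)) ^ t * ∫⁻ y in B, ω y ∂μ := by
        rw [← ENNReal.rpow_mul, e]
    _ ≤ (μ B ^ (t' / t - 1) * ∫⁻ y in B, g y ^ (t' / t) ∂μ) ^ t * ∫⁻ y in B, ω y ∂μ := by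
        gcongr
    _ = μ B ^ (t' - t) * ((∫⁻ y in B, g y ^ (t' / t) ∂μ) ^ t * ∫⁻ y in B, ω y ∂μ) := by
        rw [ENNReal.mul_rpow_of_nonneg _ _ ht.le, ← ENNReal.rpow_mul, mul_assoc]
        congr 2
        field_simp
    _ ≤ μ B ^ (t' - t) * (C * μ B ^ t * ∫⁻ y in B, g y ^ t' * ω y ∂μ) := by gcongr
    _ = C * μ B ^ t' * ∫⁻ y in B, g y ^ t' * ω y ∂μ := by
        have : μ B ^ t' = μ B ^ (t' - t) * μ B ^ t := by
          rw [← ENNReal.rpow_add_of_nonneg _ _ (by linarith) ht.le]; congr 1; ring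
        rw [this]; ring

lemma PC_of_A1 {ρ : X → X → ℝ} {μ : Measure X} {L : ℝ≥0∞} (hL : IsDoubling ρ μ L)
    {ω : X → ℝ≥0∞} (hω : Measurable ω) (hA : A1Const ρ μ ω < ∞) :
    PC ρ μ ω 1 (A1Const ρ μ ω + 1) := by
  intro x R hR h hh
  obtain ⟨hμ0, -, hμ1⟩ := hL.2.2 x R hR
  have hle : ((∫⁻ y in ball ρ x R, ω y ∂μ) / μ (ball ρ x R)) /
      essInf ω (μ.restrict (ball ρ x R)) ≤ A1Const ρ μ ω := by
    unfold A1Const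
    exact le_iSup_of_le x (le_iSup_of_le R (le_iSup_of_le hR le_rfl))
  set A := A1Const ρ μ ω
  set B := ball ρ x R
  set e := essInf ω (μ.restrict B) with he
  have hae : ∀ᵐ y ∂(μ.restrict B), e ≤ ω y := ae_essInf_le
  have hint : e * ∫⁻ y in B, h y ∂μ ≤ ∫⁻ y in B, h y * ω y ∂μ := by
    rw [← lintegral_const_mul _ hh]
    apply lintegral_mono_ae
    filter_upwards [hae] with y hy
    rw [mul_comm]; gcongr
  simp only [ENNReal.rpow_one]
  rcases eq_or_ne e 0 with h0 | h0
  · rw [h0] at hle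
    have : (∫⁻ y in B, ω y ∂μ) / μ B = 0 := by
      by_contra hne
      rw [ENNReal.div_zero hne] at hle
      exact absurd hA (not_lt.2 hle)
    rw [ENNReal.div_eq_zero_iff] at this
    rcases this with h1 | h1
    · rw [h1]; simp
    · exact absurd h1 hμ1.ne
  rcases eq_or_ne e ∞ with h1 | h1
  · rw [h1] at hint
    rcases eq_or_ne (∫⁻ y in B, h y ∂μ) 0 with h2 | h2
    · rw [h2]; simp
    · rw [ENNReal.top_mul h2, top_le_iff] at hint
      rw [hint, ENNReal.mul_top]
      · exact le_top
      · exact mul_ne_zero (by simp) hμ0.ne'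
  · rw [ENNReal.div_le_iff h0 h1, ENNReal.div_le_iff hμ0.ne' hμ1.ne] at hle
    calc (∫⁻ y in B, h y ∂μ) * ∫⁻ y in B, ω y ∂μ
        ≤ (∫⁻ y in B, h y ∂μ) * (A * e * μ B) := by gcongr
      _ = A * μ B * (e * ∫⁻ y in B, h y ∂μ) := by ring
      _ ≤ (A + 1) * μ B * ∫⁻ y in B, h y * ω y ∂μ := by gcongr; exact le_self_add

lemma PC_of_Ap {ρ : X → X → ℝ} {μ : Measure X} {L : ℝ≥0∞} (hL : IsDoubling ρ μ L)
    {ω : X → ℝ≥0∞} (hω : Measurable ω) {t : ℝ} (ht : 1 < t) (hA : ApConst ρ μ ω t < ∞) :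
    PC ρ μ ω t (ApConst ρ μ ω t + 1) := by
  intro x R hR h hh
  obtain ⟨hμ0, -, hμ1⟩ := hL.2.2 x R hR
  have hle : ((∫⁻ y in ball ρ x R, ω y ∂μ) / μ (ball ρ x R)) *
      ((∫⁻ y in ball ρ x R, ω y ^ (1 / (1 - t)) ∂μ) / μ (ball ρ x R)) ^ (t - 1)
        ≤ ApConst ρ μ ω t := by
    unfold ApConst
    exact le_iSup_of_le x (le_iSup_of_le R (le_iSup_of_le hR le_rfl))
  have ht0 : 0 < t := by linarith
  have ht1 : 0 < t - 1 := by linarith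
  have hneg : 1 / (1 - t) < 0 := by
    apply div_neg_of_pos_of_neg one_pos; linarith
  set A := ApConst ρ μ ω t
  set B := ball ρ x R
  set W' := ∫⁻ y in B, ω y ^ (1 / (1 - t)) ∂μ with hW'
  set W := ∫⁻ y in B, ω y ∂μ with hW
  have hm' : Measurable fun y => ω y ^ (1 / (1 - t)) := hω.pow_const _
  rcases eq_or_ne W' 0 with h0 | h0
  · have hae : ∀ᵐ y ∂(μ.restrict B), ω y = ∞ := by
      rw [hW', lintegral_eq_zero_iff hm'] at h0
      filter_upwards [h0] with y hy
      simp only [Pi.zero_apply, ENNReal.rpow_eq_zero_iff] at hy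
      rcases hy with hy | hy
      · exact absurd hy.2 (not_lt.2 hneg.le)
      · exact hy.1
    have hint : ∫⁻ y in B, h y ^ t * ω y ∂μ = (∫⁻ y in B, h y ^ t ∂μ) * ∞ := by
      rw [← lintegral_mul_const _ (hh.pow_const _)]
      apply lintegral_congr_ae
      filter_upwards [hae] with y hy
      rw [hy]
    rw [hint]
    rcases eq_or_ne (∫⁻ y in B, h y ^ t ∂μ) 0 with h2 | h2
    · have := jensen (μ.restrict B) h hh.aemeasurable ht.le
      rw [h2, mul_zero, nonpos_iff_eq_zero] at this
      rw [this]; simp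
    · rw [ENNReal.mul_top h2, ENNReal.mul_top]
      · exact le_top
      · refine mul_ne_zero (by simp) ?_
        simp [hμ0.ne', hμ1.ne]
  rcases eq_or_ne W' ∞ with h1 | h1
  · rw [h1, ENNReal.top_div_of_ne_top hμ1.ne, ENNReal.top_rpow_of_pos ht1] at hle
    have : W / μ B = 0 := by
      by_contra hne
      rw [ENNReal.mul_top hne] at hle
      exact absurd hA (not_lt.2 hle)
    rw [ENNReal.div_eq_zero_iff] at this
    rcases this with h1 | h1
    · rw [h1]; simp
    · exact absurd h1 hμ1.ne
  have hWtop : W ≠ ∞ := by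
    intro hWt
    rw [hWt, ENNReal.top_div_of_ne_top hμ1.ne, ENNReal.top_mul] at hle
    · exact absurd hA (not_lt.2 hle)
    · intro h3
      rw [ENNReal.rpow_eq_zero_iff] at h3
      rcases h3 with h3 | h3
      · rw [ENNReal.div_eq_zero_iff] at h3
        rcases h3.1 with h4 | h4
        · exact h0 h4
        · exact hμ1.ne h4
      · linarith [h3.2]
  have hWW : W * W' ^ (t - 1) ≤ A * μ B ^ t := by
    have e : μ B ^ t = μ B * μ B ^ (t - 1) := by
      conv_lhs => rw [show t = 1 + (t - 1) by ring]
      rw [ENNReal.rpow_add_of_nonneg _ _ zero_le_one ht1.le, ENNReal.rpow_one]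
    have hp0 : μ B ^ (t - 1) ≠ 0 := by simp [hμ0.ne', hμ1.ne]
    have hp1 : μ B ^ (t - 1) ≠ ∞ := ENNReal.rpow_ne_top_of_nonneg ht1.le hμ1.ne
    rw [ENNReal.div_rpow_of_nonneg _ _ ht1.le] at hle
    calc W * W' ^ (t - 1) = (W / μ B * μ B) * (W' ^ (t - 1) / μ B ^ (t - 1) * μ B ^ (t - 1)) := by
          rw [ENNReal.div_mul_cancel hμ0.ne' hμ1.ne, ENNReal.div_mul_cancel hp0 hp1]
      _ = (W / μ B * (W' ^ (t - 1) / μ B ^ (t - 1))) * μ B ^ t := by rw [e]; ring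
      _ ≤ A * μ B ^ t := by gcongr
  have hae1 : ∀ᵐ y ∂(μ.restrict B), ω y < ∞ := ae_lt_top hω hWtop
  have hae2 : ∀ᵐ y ∂(μ.restrict B), ω y ≠ 0 := by
    filter_upwards [ae_lt_top hm' h1] with y hy h5
    rw [h5, ENNReal.zero_rpow_of_neg hneg] at hy
    exact lt_irrefl _ hy
  have hH : (∫⁻ y in B, h y ∂μ) ^ t ≤ (∫⁻ y in B, h y ^ t * ω y ∂μ) * W' ^ (t - 1) := by
    have := holder_pow (μ.restrict B) (fun y => h y * ω y ^ (1 / t)) (fun y => ω y ^ (-(1 / t)))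
      (hh.mul (hω.pow_const _)).aemeasurable (hω.pow_const _).aemeasurable ht
    have e1 : ∫⁻ y in B, h y * ω y ^ (1 / t) * ω y ^ (-(1 / t)) ∂μ = ∫⁻ y in B, h y ∂μ := by
      apply lintegral_congr_ae
      filter_upwards [hae1, hae2] with y h5 h6
      rw [mul_assoc, ← ENNReal.rpow_add _ _ h6 h5.ne]
      simp
    have e2 : ∀ y, (h y * ω y ^ (1 / t)) ^ t = h y ^ t * ω y := by
      intro y
      rw [ENNReal.mul_rpow_of_nonneg _ _ ht0.le, ← ENNReal.rpow_mul]
      have : 1 / t * t = 1 := by field_simp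
      rw [this, ENNReal.rpow_one]
    have e3 : ∀ y, (ω y ^ (-(1 / t))) ^ (t / (t - 1)) = ω y ^ (1 / (1 - t)) := by
      intro y
      rw [← ENNReal.rpow_mul]
      congr 1
      have h7 : 1 - t ≠ 0 := by linarith
      have h8 : t - 1 ≠ 0 := by linarith
      field_simp
      ring
    simp only [e1, e2, e3] at this
    exact this
  calc (∫⁻ y in B, h y ∂μ) ^ t * W ≤ (∫⁻ y in B, h y ^ t * ω y ∂μ) * W' ^ (t - 1) * W := by gcongr
    _ = (W * W' ^ (t - 1)) * ∫⁻ y in B, h y ^ t * ω y ∂μ := by ring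
    _ ≤ (A * μ B ^ t) * ∫⁻ y in B, h y ^ t * ω y ∂μ := by gcongr
    _ ≤ (A + 1) * μ B ^ t * ∫⁻ y in B, h y ^ t * ω y ∂μ := by gcongr; exact le_self_add

lemma doubling_const {ρ : X → X → ℝ} {μ : Measure X} {L : ℝ≥0∞} (hL : IsDoubling ρ μ L) (c : ℝ) :
    ∃ D : ℝ≥0∞, 1 ≤ D ∧ D < ∞ ∧ ∀ (x : X) (r : ℝ), 0 < r →
      μ (ball ρ x (c * r)) ≤ D * μ (ball ρ x r) := by
  obtain ⟨n, hn⟩ := pow_unbounded_of_one_lt c (one_lt_two)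
  refine ⟨L ^ n, one_le_pow₀ hL.1, ENNReal.pow_lt_top hL.2.1, fun x r hr => ?_⟩
  have key : ∀ n : ℕ, μ (ball ρ x (2 ^ n * r)) ≤ L ^ n * μ (ball ρ x r) := by
    intro n
    induction n with
    | zero => simp
    | succ k ih =>
      have := (hL.2.2 x (2 ^ k * r) (by positivity)).2.1
      calc μ (ball ρ x (2 ^ (k + 1) * r)) = μ (ball ρ x (2 * (2 ^ k * r))) := by
            congr 2; ring
        _ ≤ L * μ (ball ρ x (2 ^ k * r)) := this
        _ ≤ L * (L ^ k * μ (ball ρ x r)) := by gcongr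
        _ = L ^ (k + 1) * μ (ball ρ x r) := by ring
  refine le_trans (measure_mono (ball_mono ρ x ?_)) (key n)
  gcongr

lemma ball_sub {ρ : X → X → ℝ} {μ : Measure X} {K₀ : ℝ} (hX : IsQuasiMetricMeasure ρ μ K₀)
    {x y : X} {a b c : ℝ} (h : ρ x y ≤ a) (hc : K₀ * (a + b) ≤ c) : ball ρ y b ⊆ ball ρ x c := by
  intro z hz
  have h1 := hX.triangle x y z
  have hK := hX.one_le
  have hz' : ρ y z < b := hz
  have : K₀ * (ρ x y + ρ y z) < K₀ * (a + b) := by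
    apply mul_lt_mul_of_pos_left _ (by linarith)
    linarith
  show ρ x z < c
  linarith

lemma sigmaFin [Nonempty X] {ρ : X → X → ℝ} {μ : Measure X} {L : ℝ≥0∞} (hL : IsDoubling ρ μ L) :
    SigmaFinite μ := by
  obtain ⟨x₀⟩ := ‹Nonempty X›
  refine ⟨⟨⟨fun n : ℕ => ball ρ x₀ (n + 1), fun _ => trivial, fun n => ?_, ?_⟩⟩⟩
  · exact (hL.2.2 x₀ (n + 1) (by positivity)).2.2
  · rw [eq_univ_iff_forall]
    intro y
    obtain ⟨n, hn⟩ := exists_nat_gt (ρ x₀ y)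
    rw [mem_iUnion]
    refine ⟨n, ?_⟩
    show ρ x₀ y < n + 1
    linarith

lemma exists_net [Nonempty X] {ρ : X → X → ℝ} {μ : Measure X} {K₀ : ℝ} {L : ℝ≥0∞}
    (hX : IsQuasiMetricMeasure ρ μ K₀) (hL : IsDoubling ρ μ L) {R : ℝ} (hR : 0 < R) :
    ∃ S : Set X, S.Countable ∧ (∀ x, ∃ z ∈ S, ρ z x < R) ∧
      Pairwise (Function.onFun Disjoint fun z : S => ball ρ (z : X) (R / (2 * K₀))) := by
  have hK := hX.one_le
  obtain ⟨S, hS⟩ := zorn_subset {S : Set X | S.Pairwise fun z w => R ≤ ρ z w} (by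
    intro c hc hch
    refine ⟨⋃₀ c, ?_, fun s hs => subset_sUnion_of_mem hs⟩
    exact (pairwise_sUnion hch.directedOn).2 fun s hs => hc hs)
  have hdis : Pairwise (Function.onFun Disjoint fun z : S => ball ρ (z : X) (R / (2 * K₀))) := by
    intro z w hzw
    refine Set.disjoint_left.2 fun u hu hu' => ?_
    have h1 : R ≤ ρ z w := hS.1 z.2 w.2 (fun h => hzw (Subtype.ext h))
    have h2 : ρ z u < R / (2 * K₀) := hu
    have h3 : ρ w u < R / (2 * K₀) := hu'
    rw [hX.symm] at h3
    have h4 := hX.triangle z u w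
    have h5 : K₀ * (ρ z u + ρ u w) < K₀ * (R / (2 * K₀) + R / (2 * K₀)) :=
      mul_lt_mul_of_pos_left (by linarith) (by linarith)
    have h6 : K₀ * (R / (2 * K₀) + R / (2 * K₀)) = R := by field_simp; ring
    linarith
  haveI := sigmaFin hL
  have hcount := Measure.countable_meas_pos_of_disjoint_iUnion (μ := μ)
    (fun z : S => hX.measurableSet_ball (z : X) (R / (2 * K₀))) hdis
  have huniv : {i : S | 0 < μ (ball ρ (i : X) (R / (2 * K₀)))} = univ := by
    rw [eq_univ_iff_forall]
    exact fun i => (hL.2.2 i _ (by positivity)).1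
  rw [huniv, Set.countable_univ_iff] at hcount
  refine ⟨S, hcount, fun x => ?_, hdis⟩
  by_contra hcon
  push Not at hcon
  have hins : insert x S ∈ {S : Set X | S.Pairwise fun z w => R ≤ ρ z w} := by
    refine (Set.pairwise_insert).2 ⟨hS.1, fun b hb _ => ⟨?_, hcon b hb⟩⟩
    rw [hX.symm]; exact hcon b hb
  have hx : x ∈ S := hS.2 hins (subset_insert x S) (mem_insert x S)
  have := hcon x hx
  rw [(hX.eq_zero_iff x x).2 rfl] at this
  linarith

lemma avg_op [Nonempty X] {ρ : X → X → ℝ} {μ : Measure X} {K₀ : ℝ} {L : ℝ≥0∞}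
    (hX : IsQuasiMetricMeasure ρ μ K₀) (hL : IsDoubling ρ μ L) {ω : X → ℝ≥0∞} (hω : Measurable ω)
    {t : ℝ} (ht : 1 ≤ t) {C : ℝ≥0∞} (hC : C < ∞) (hP : PC ρ μ ω t C) :
    ∃ C' : ℝ≥0∞, C' < ∞ ∧ ∀ R : ℝ, 0 < R → ∀ h : X → ℝ≥0∞, Measurable h →
      ∃ T : X → ℝ≥0∞, Measurable T ∧
        (∀ x, ∫⁻ y in ball ρ x R, h y ∂μ ≤ μ (ball ρ x R) * T x) ∧
        ∫⁻ x, T x ^ t * ω x ∂μ ≤ C' * ∫⁻ x, h x ^ t * ω x ∂μ := by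
  have hK := hX.one_le
  have ht0 : 0 < t := by linarith
  obtain ⟨D₁, h1D₁, hD₁, hd₁⟩ := doubling_const hL (K₀ * (1 + 2 * K₀))
  set c₃ := K₀ * (2 * K₀ + 1) with hc₃
  obtain ⟨D₃, h1D₃, hD₃, hd₃⟩ := doubling_const hL (K₀ * (2 * K₀ + c₃) * (2 * K₀))
  refine ⟨D₁ ^ t * C * D₃, ENNReal.mul_lt_top (ENNReal.mul_lt_top
    (ENNReal.rpow_lt_top_of_nonneg ht0.le hD₁.ne) hC) hD₃, fun R hR h hh => ?_⟩
  obtain ⟨S, hSc, hScov, hSd⟩ := exists_net hX hL hR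
  haveI : Countable S := hSc.to_subtype
  have hKR : 0 < 2 * K₀ * R := by positivity
  have hpos : ∀ z : X, μ (ball ρ z (2 * K₀ * R)) ≠ 0 := fun z => (hL.2.2 z _ hKR).1.ne'
  have hfin : ∀ z : X, μ (ball ρ z (2 * K₀ * R)) ≠ ∞ := fun z => (hL.2.2 z _ hKR).2.2.ne
  set I : X → ℝ≥0∞ := fun z => ∫⁻ y in ball ρ z (2 * K₀ * R), h y ∂μ with hI
  set a : X → ℝ≥0∞ := fun z => D₁ * (I z / μ (ball ρ z (2 * K₀ * R))) with ha
  set T : X → ℝ≥0∞ := fun x => ⨆ z : S, (ball ρ (z : X) R).indicator (fun _ => a z) x with hT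
  refine ⟨T, ?_, ?_, ?_⟩
  · exact Measurable.iSup fun z => measurable_const.indicator (hX.measurableSet_ball _ _)
  · intro x
    obtain ⟨z, hz, hzx⟩ := hScov x
    have haT : a z ≤ T x := by
      refine le_trans ?_ (le_iSup _ (⟨z, hz⟩ : S))
      rw [indicator_of_mem]
      exact hzx
    have hsub : ball ρ x R ⊆ ball ρ z (2 * K₀ * R) := ball_sub hX hzx.le (by linarith)
    have hm : μ (ball ρ z (2 * K₀ * R)) ≤ D₁ * μ (ball ρ x R) := by
      refine le_trans (measure_mono ?_) (hd₁ x R hR)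
      refine ball_sub hX (a := R) ?_ (by linarith)
      rw [hX.symm]; exact hzx.le
    calc ∫⁻ y in ball ρ x R, h y ∂μ ≤ I z := lintegral_mono_set hsub
      _ = μ (ball ρ z (2 * K₀ * R)) * (I z / μ (ball ρ z (2 * K₀ * R))) := by
          rw [ENNReal.mul_div_cancel (hpos z) (hfin z)]
      _ ≤ (D₁ * μ (ball ρ x R)) * (I z / μ (ball ρ z (2 * K₀ * R))) := by gcongr
      _ = μ (ball ρ x R) * a z := by rw [ha]; ring
      _ ≤ μ (ball ρ x R) * T x := by gcongr
  · have step1 : ∀ x, T x ^ t * ω x ≤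
        ∑' z : S, (ball ρ (z : X) R).indicator (fun x => a z ^ t * ω x) x := by
      intro x
      have : T x ^ t * ω x = ⨆ z : S, ((ball ρ (z : X) R).indicator (fun _ => a z) x) ^ t * ω x := by
        rw [hT]
        simp only
        rw [← ENNReal.iSup_mul]
        congr 1
        exact (ENNReal.orderIsoRpow t ht0).map_iSup _
      rw [this]
      refine iSup_le fun z => le_trans (le_of_eq ?_) (ENNReal.le_tsum z)
      by_cases hx : x ∈ ball ρ (z : X) R
      · simp [hx]
      · simp [hx, ENNReal.zero_rpow_of_pos ht0]
    have step2 : ∀ z : S, ∫⁻ x, (ball ρ (z : X) R).indicator (fun x => a z ^ t * ω x) x ∂μ ≤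
        D₁ ^ t * C * ∫⁻ x, (ball ρ (z : X) (2 * K₀ * R)).indicator (fun x => h x ^ t * ω x) x ∂μ := by
      intro z
      rw [lintegral_indicator (hX.measurableSet_ball _ _),
        lintegral_indicator (hX.measurableSet_ball _ _), lintegral_const_mul _ hω]
      have hp := hP z (2 * K₀ * R) hKR h hh
      have hμt0 : μ (ball ρ z (2 * K₀ * R)) ^ t ≠ 0 := by simp [hpos, hfin]
      have hμt1 : μ (ball ρ z (2 * K₀ * R)) ^ t ≠ ∞ :=
        ENNReal.rpow_ne_top_of_nonneg ht0.le (hfin z)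
      calc a z ^ t * ∫⁻ x in ball ρ (z : X) R, ω x ∂μ
          ≤ a z ^ t * ∫⁻ x in ball ρ (z : X) (2 * K₀ * R), ω x ∂μ := by
            gcongr
            apply ball_mono
            nlinarith
        _ = D₁ ^ t * ((I z ^ t * ∫⁻ x in ball ρ (z : X) (2 * K₀ * R), ω x ∂μ) /
              μ (ball ρ z (2 * K₀ * R)) ^ t) := by
            rw [ha]
            simp only
            rw [ENNReal.mul_rpow_of_nonneg _ _ ht0.le, ENNReal.div_rpow_of_nonneg _ _ ht0.le,
              div_eq_mul_inv, div_eq_mul_inv]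
            ring
        _ ≤ D₁ ^ t * (C * ∫⁻ x in ball ρ (z : X) (2 * K₀ * R), h x ^ t * ω x ∂μ) := by
            gcongr
            rw [ENNReal.div_le_iff hμt0 hμt1]
            refine hp.trans (le_of_eq ?_)
            ring
        _ = _ := by ring
    have step3 : ∀ y, ∑' z : S, (ball ρ (z : X) (2 * K₀ * R)).indicator (fun _ => (1 : ℝ≥0∞)) y
        ≤ D₃ := by
      intro y
      have hc₃0 : 0 < c₃ := by positivity
      obtain ⟨hy0, -, hy1⟩ := hL.2.2 y (c₃ * R) (by positivity)
      rw [← ENNReal.mul_le_mul_iff_right hy0.ne' hy1.ne, mul_comm, ← ENNReal.tsum_mul_right]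
      classical
      set As : S → Set X := fun z => if y ∈ ball ρ (z : X) (2 * K₀ * R) then
        ball ρ (z : X) (R / (2 * K₀)) else ∅ with hAs
      have hAsub : ∀ z : S, As z ⊆ ball ρ (z : X) (R / (2 * K₀)) := by
        intro z; rw [hAs]; simp only; split_ifs
        · exact le_rfl
        · exact empty_subset _
      have hAm : ∀ z, MeasurableSet (As z) := by
        intro z; rw [hAs]; simp only; split_ifs
        · exact hX.measurableSet_ball _ _
        · exact MeasurableSet.empty
      have hAd : Pairwise (Function.onFun Disjoint As) := fun z w hzw =>
        (hSd hzw).mono (hAsub z) (hAsub w)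
      have hRK : R / (2 * K₀) ≤ R := div_le_self hR.le (by linarith)
      have hAu : (⋃ z, As z) ⊆ ball ρ y (c₃ * R) := by
        refine iUnion_subset fun z => ?_
        rw [hAs]; simp only; split_ifs with hz
        · refine ball_sub hX (a := 2 * K₀ * R) ?_ ?_
          · rw [hX.symm]; exact le_of_lt hz
          · rw [hc₃]
            have : K₀ * (2 * K₀ * R + R / (2 * K₀)) ≤ K₀ * (2 * K₀ * R + R) := by gcongr
            linarith
        · exact empty_subset _
      calc ∑' z : S, (ball ρ (z : X) (2 * K₀ * R)).indicator (fun _ => (1 : ℝ≥0∞)) y *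
              μ (ball ρ y (c₃ * R))
          ≤ ∑' z : S, D₃ * μ (As z) := by
            refine ENNReal.tsum_le_tsum fun z => ?_
            by_cases hz : y ∈ ball ρ (z : X) (2 * K₀ * R)
            · rw [indicator_of_mem hz, one_mul, hAs]
              simp only [hz, if_true]
              refine le_trans (measure_mono ?_) (hd₃ z (R / (2 * K₀)) (by positivity))
              refine ball_sub hX (le_of_lt hz) (le_of_eq ?_)
              field_simp
            · rw [indicator_of_notMem hz, zero_mul]; exact zero_le
        _ = D₃ * ∑' z : S, μ (As z) := ENNReal.tsum_mul_left
        _ ≤ D₃ * μ (⋃ z, As z) := by gcongr; exact tsum_meas_le_meas_iUnion_of_disjoint μ hAm hAd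
        _ ≤ D₃ * μ (ball ρ y (c₃ * R)) := by gcongr
        _ = _ := by ring
    have hmh : Measurable fun x => h x ^ t * ω x := (hh.pow_const _).mul hω
    calc ∫⁻ x, T x ^ t * ω x ∂μ
        ≤ ∫⁻ x, ∑' z : S, (ball ρ (z : X) R).indicator (fun x => a z ^ t * ω x) x ∂μ :=
          lintegral_mono step1
      _ = ∑' z : S, ∫⁻ x, (ball ρ (z : X) R).indicator (fun x => a z ^ t * ω x) x ∂μ :=
          lintegral_tsum fun z =>
            ((hω.const_mul _).indicator (hX.measurableSet_ball _ _)).aemeasurable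
      _ ≤ ∑' z : S, D₁ ^ t * C *
            ∫⁻ x, (ball ρ (z : X) (2 * K₀ * R)).indicator (fun x => h x ^ t * ω x) x ∂μ :=
          ENNReal.tsum_le_tsum step2
      _ = D₁ ^ t * C * ∫⁻ x, ∑' z : S,
            (ball ρ (z : X) (2 * K₀ * R)).indicator (fun x => h x ^ t * ω x) x ∂μ := by
          rw [ENNReal.tsum_mul_left, lintegral_tsum fun z =>
            (hmh.indicator (hX.measurableSet_ball _ _)).aemeasurable]
      _ ≤ D₁ ^ t * C * ∫⁻ x, D₃ * (h x ^ t * ω x) ∂μ := by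
          gcongr with x
          calc ∑' z : S, (ball ρ (z : X) (2 * K₀ * R)).indicator (fun x => h x ^ t * ω x) x
              = ∑' z : S, (ball ρ (z : X) (2 * K₀ * R)).indicator (fun _ => (1 : ℝ≥0∞)) x *
                  (h x ^ t * ω x) := by
                congr 1
                ext z
                by_cases hx : x ∈ ball ρ (z : X) (2 * K₀ * R) <;> simp [hx]
            _ = (∑' z : S, (ball ρ (z : X) (2 * K₀ * R)).indicator (fun _ => (1 : ℝ≥0∞)) x) *
                  (h x ^ t * ω x) := ENNReal.tsum_mul_right
            _ ≤ _ := by gcongr; exact step3 x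
      _ = _ := by rw [lintegral_const_mul _ hmh]; ring

lemma rpow_add_le' (a b : ℝ≥0∞) {t : ℝ} (ht : 0 ≤ t) :
    (a + b) ^ t ≤ 2 ^ t * (a ^ t + b ^ t) := by
  have h1 : a + b ≤ 2 * max a b := by
    rw [two_mul]; exact add_le_add (le_max_left _ _) (le_max_right _ _)
  have h2 : (max a b) ^ t ≤ a ^ t + b ^ t := by
    rcases le_total a b with h | h
    · rw [max_eq_right h]; exact le_add_self
    · rw [max_eq_left h]; exact le_self_add
  calc (a + b) ^ t ≤ (2 * max a b) ^ t := ENNReal.rpow_le_rpow h1 ht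
    _ = 2 ^ t * (max a b) ^ t := ENNReal.mul_rpow_of_nonneg _ _ ht
    _ ≤ _ := by gcongr

lemma abs_pow_le (a b : ℝ) {q : ℝ} (hq : 0 ≤ q) :
    ENNReal.ofReal |a - b| ^ q ≤ 2 ^ q * (ENNReal.ofReal |a| ^ q + ENNReal.ofReal |b| ^ q) := by
  refine le_trans (ENNReal.rpow_le_rpow ?_ hq) (rpow_add_le' _ _ hq)
  rw [← ENNReal.ofReal_add (abs_nonneg _) (abs_nonneg _)]
  exact ENNReal.ofReal_le_ofReal (abs_sub a b)

lemma geo_eq {Λ q s : ℝ} (hΛ : 1 < Λ) (hq : 0 < q) (hs : 0 < s) :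
    ENNReal.ofReal s * ∑' n : ℕ, (ENNReal.ofReal (Λ ^ n)) ^ (-(s * q)) =
      ENNReal.ofReal (s / (1 - Real.exp (-(s * q * Real.log Λ)))) := by
  have hlog := Real.log_pos hΛ
  have hv : 0 < s * q * Real.log Λ := by positivity
  have he : Real.exp (-(s * q * Real.log Λ)) < 1 := by rw [Real.exp_lt_one_iff]; linarith
  have h1 : ∀ n : ℕ, (ENNReal.ofReal (Λ ^ n)) ^ (-(s * q)) =
      (ENNReal.ofReal (Real.exp (-(s * q * Real.log Λ)))) ^ n := by
    intro n
    have hΛ0 : 0 < Λ := by linarith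
    rw [ENNReal.ofReal_rpow_of_pos (by positivity), ← ENNReal.ofReal_pow (Real.exp_pos _).le]
    congr 1
    rw [Real.rpow_def_of_pos (by positivity), Real.log_pow, ← Real.exp_nat_mul]
    congr 1; ring
  simp_rw [h1]
  rw [ENNReal.tsum_geometric, ← ENNReal.ofReal_one, ← ENNReal.ofReal_sub _ (Real.exp_pos _).le,
    ENNReal.ofReal_div_of_pos (by linarith), div_eq_mul_inv]

lemma geo_upper {Λ q s : ℝ} (hΛ : 1 < Λ) (hq : 0 < q) (hs : 0 < s) (hs1 : s ≤ 1) :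
    ENNReal.ofReal s * ∑' n : ℕ, (ENNReal.ofReal (Λ ^ n)) ^ (-(s * q)) ≤
      ENNReal.ofReal ((1 + q * Real.log Λ) / (q * Real.log Λ)) := by
  rw [geo_eq hΛ hq hs]
  apply ENNReal.ofReal_le_ofReal
  have hlog := Real.log_pos hΛ
  have hv : 0 < s * q * Real.log Λ := by positivity
  set v := s * q * Real.log Λ with hvd
  have he : Real.exp (-v) < 1 := by rw [Real.exp_lt_one_iff]; linarith
  have h2 : (1 + v) * Real.exp (-v) ≤ 1 := by
    have := Real.add_one_le_exp v
    calc (1 + v) * Real.exp (-v) ≤ Real.exp v * Real.exp (-v) := by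
          apply mul_le_mul_of_nonneg_right (by linarith) (Real.exp_pos _).le
      _ = 1 := by rw [← Real.exp_add]; simp
  have hl : 0 < q * Real.log Λ := by positivity
  rw [div_le_div_iff₀ (by linarith) hl]
  have h3 : v ≤ q * Real.log Λ := by rw [hvd, mul_assoc]; exact mul_le_of_le_one_left hl.le hs1
  have h4 : v ≤ (1 + v) * (1 - Real.exp (-v)) := by nlinarith
  calc s * (q * Real.log Λ) = v := by rw [hvd]; ring
    _ ≤ (1 + v) * (1 - Real.exp (-v)) := h4
    _ ≤ _ := mul_le_mul_of_nonneg_right (by linarith) (by linarith)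

lemma geo_lower {Λ q s : ℝ} (hΛ : 1 < Λ) (hq : 0 < q) (hs : 0 < s) :
    ENNReal.ofReal (1 / (q * Real.log Λ)) ≤
      ENNReal.ofReal s * ∑' n : ℕ, (ENNReal.ofReal (Λ ^ n)) ^ (-(s * q)) := by
  rw [geo_eq hΛ hq hs]
  apply ENNReal.ofReal_le_ofReal
  have hlog := Real.log_pos hΛ
  have hv : 0 < s * q * Real.log Λ := by positivity
  have he : Real.exp (-(s * q * Real.log Λ)) < 1 := by rw [Real.exp_lt_one_iff]; linarith
  have h2 := Real.add_one_le_exp (-(s * q * Real.log Λ))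
  rw [div_le_div_iff₀ (by positivity) (by linarith)]
  nlinarith

/-- inner integral -/
def FF (ρ : X → X → ℝ) (μ : Measure X) (E : Set X) (f : X → ℝ) (q s : ℝ) (x : X) : ℝ≥0∞ :=
  ∫⁻ y in E, ENNReal.ofReal |f x - f y| ^ q /
      (U ρ μ x y * ENNReal.ofReal (ρ x y) ^ (s * q)) ∂μ

lemma upper_ptw {ρ : X → X → ℝ} {μ : Measure X} {K₀ : ℝ} {L : ℝ≥0∞}
    (hX : IsQuasiMetricMeasure ρ μ K₀) (hL : IsDoubling ρ μ L) {q : ℝ} (hq : 0 < q) :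
    ∃ C : ℝ≥0∞, C < ∞ ∧ ∀ (Ω : Set X) (f : X → ℝ) (T : ℕ → X → ℝ≥0∞) (s s₀ : ℝ) (x : X),
      MeasurableSet Ω → Measurable f → 0 < s → s ≤ s₀ →
      (∀ k : ℕ, ∫⁻ y in ball ρ x (2 ^ (k + 1)), Ω.indicator (fun y => ENNReal.ofReal |f y| ^ q) y ∂μ
        ≤ μ (ball ρ x (2 ^ (k + 1))) * T k x) →
      FF ρ μ Ω f q s x ≤ FF ρ μ Ω f q s₀ x +
        C * ∑' k : ℕ, (ENNReal.ofReal ((2 : ℝ) ^ k)) ^ (-(s * q)) *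
          (ENNReal.ofReal |f x| ^ q + T k x) := by
  have hK := hX.one_le
  obtain ⟨D₁, h1D₁, hD₁, hd₁⟩ := doubling_const hL (2 * K₀)
  set D := L * D₁ with hD
  have hD0 : D ≠ 0 := mul_ne_zero (zero_lt_one.trans_le hL.1).ne' (zero_lt_one.trans_le h1D₁).ne'
  have hDt : D ≠ ∞ := (ENNReal.mul_lt_top hL.2.1 hD₁).ne
  have h2q : (2 : ℝ≥0∞) ^ q ≠ ∞ := ENNReal.rpow_ne_top_of_nonneg hq.le (by simp)
  refine ⟨2 ^ q * D, ENNReal.mul_lt_top h2q.lt_top hDt.lt_top,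
    fun Ω f T s s₀ x hΩ hf hs hss hT => ?_⟩
  set g : X → ℝ≥0∞ := fun y => ENNReal.ofReal |f y| ^ q with hg
  have hgm : Measurable g := (hf.abs.ennreal_ofReal).pow_const _
  set Φ : ℝ → X → ℝ≥0∞ := fun s y => ENNReal.ofReal |f x - f y| ^ q /
      (U ρ μ x y * ENNReal.ofReal (ρ x y) ^ (s * q)) with hΦ
  set Ann : ℕ → Set X := fun k => ball ρ x (2 ^ (k + 1)) \ ball ρ x (2 ^ k) with hAnn
  have hAm : ∀ k, MeasurableSet (Ann k) := fun k =>
    (hX.measurableSet_ball _ _).diff (hX.measurableSet_ball _ _)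
  have hcov : Ω ⊆ (Ω ∩ ball ρ x 1) ∪ ⋃ k, Ω ∩ Ann k := by
    intro y hy
    by_cases h1 : ρ x y < 1
    · exact Or.inl ⟨hy, h1⟩
    · right
      obtain ⟨k, hk1, hk2⟩ := exists_nat_pow_near (not_lt.1 h1) (one_lt_two : (1 : ℝ) < 2)
      exact mem_iUnion.2 ⟨k, hy, hk2, not_lt.2 hk1⟩
  have hnear : ∫⁻ y in Ω ∩ ball ρ x 1, Φ s y ∂μ ≤ FF ρ μ Ω f q s₀ x := by
    refine le_trans (setLIntegral_mono' (g := Φ s₀) (hΩ.inter (hX.measurableSet_ball _ _)) ?_)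
      (lintegral_mono_set inter_subset_left)
    rintro y ⟨-, hy⟩
    have hy' : ρ x y < 1 := hy
    simp only [hΦ]
    have hpw : ENNReal.ofReal (ρ x y) ^ (s₀ * q) ≤ ENNReal.ofReal (ρ x y) ^ (s * q) := by
      apply ENNReal.rpow_le_rpow_of_exponent_ge
      · rw [← ENNReal.ofReal_one]; exact ENNReal.ofReal_le_ofReal hy'.le
      · gcongr
    exact ENNReal.div_le_div_left (mul_le_mul_right hpw _) _
  have hfar : ∀ k : ℕ, ∫⁻ y in Ω ∩ Ann k, Φ s y ∂μ ≤
      2 ^ q * D * ((ENNReal.ofReal ((2 : ℝ) ^ k)) ^ (-(s * q)) * (g x + T k x)) := by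
    intro k
    obtain ⟨hV0, -, hV1⟩ := hL.2.2 x (2 ^ (k + 1)) (by positivity)
    set V := μ (ball ρ x (2 ^ (k + 1))) with hV
    set c := (ENNReal.ofReal ((2 : ℝ) ^ k)) ^ (-(s * q)) with hc
    have hpt : ∀ y ∈ Ω ∩ Ann k, Φ s y ≤ 2 ^ q * D * c * V⁻¹ * (g x + Ω.indicator g y) := by
      rintro y ⟨hyΩ, hy1, hy2⟩
      rw [indicator_of_mem hyΩ]
      have hy1' : ρ x y < 2 ^ (k + 1) := hy1
      have hy2' : 2 ^ k ≤ ρ x y := not_lt.1 hy2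
      have hρ : 0 < ρ x y := lt_of_lt_of_le (by positivity) hy2'
      have hVU : V ≤ D * U ρ μ x y := by
        have e1 : V ≤ L * μ (ball ρ x (ρ x y)) := by
          have := (hL.2.2 x (2 ^ k) (by positivity)).2.1
          rw [← pow_succ'] at this
          refine this.trans ?_
          gcongr
          exact ball_mono ρ x hy2'
        have e2 : μ (ball ρ x (ρ x y)) ≤ D₁ * U ρ μ x y := by
          unfold U
          rcases min_choice (μ (ball ρ x (ρ x y))) (μ (ball ρ y (ρ x y))) with h | h
          · rw [h]; exact le_mul_of_one_le_left' h1D₁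
          · rw [h]
            refine le_trans (measure_mono ?_) (hd₁ y _ hρ)
            exact ball_sub hX (hX.symm y x).le (by linarith)
        calc V ≤ L * μ (ball ρ x (ρ x y)) := e1
          _ ≤ L * (D₁ * U ρ μ x y) := by gcongr
          _ = D * U ρ μ x y := by rw [hD]; ring
      have hUi : (U ρ μ x y)⁻¹ ≤ D * V⁻¹ := by
        calc (U ρ μ x y)⁻¹ = D * (D * U ρ μ x y)⁻¹ := by
              rw [ENNReal.mul_inv (Or.inl hD0) (Or.inl hDt), ← mul_assoc,
                ENNReal.mul_inv_cancel hD0 hDt, one_mul]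
          _ ≤ D * V⁻¹ := by gcongr
      have hρi : (ENNReal.ofReal (ρ x y) ^ (s * q))⁻¹ ≤ c := by
        rw [hc, ENNReal.rpow_neg]
        gcongr
      have hsq : 0 < s * q := by positivity
      have hr0 : ENNReal.ofReal (ρ x y) ^ (s * q) ≠ 0 := by
        simp [ENNReal.rpow_eq_zero_iff, hsq.le, hρ, not_lt.2 hsq.le]
      have hr1 : ENNReal.ofReal (ρ x y) ^ (s * q) ≠ ∞ :=
        ENNReal.rpow_ne_top_of_nonneg hsq.le ENNReal.ofReal_ne_top
      simp only [hΦ]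
      rw [div_eq_mul_inv, ENNReal.mul_inv (Or.inr hr1) (Or.inr hr0)]
      calc ENNReal.ofReal |f x - f y| ^ q * ((U ρ μ x y)⁻¹ * (ENNReal.ofReal (ρ x y) ^ (s * q))⁻¹)
          ≤ (2 ^ q * (g x + g y)) * ((D * V⁻¹) * c) := by
            gcongr
            exact abs_pow_le _ _ hq.le
        _ = _ := by ring
    have him : Measurable (Ω.indicator g) := hgm.indicator hΩ
    have hsub : Ω ∩ Ann k ⊆ ball ρ x (2 ^ (k + 1)) := fun y hy => hy.2.1
    calc ∫⁻ y in Ω ∩ Ann k, Φ s y ∂μ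
        ≤ ∫⁻ y in Ω ∩ Ann k, 2 ^ q * D * c * V⁻¹ * (g x + Ω.indicator g y) ∂μ :=
          setLIntegral_mono' (hΩ.inter (hAm k)) hpt
      _ ≤ ∫⁻ y in ball ρ x (2 ^ (k + 1)), 2 ^ q * D * c * V⁻¹ * (g x + Ω.indicator g y) ∂μ :=
          lintegral_mono_set hsub
      _ = 2 ^ q * D * c * V⁻¹ * (g x * V + ∫⁻ y in ball ρ x (2 ^ (k + 1)), Ω.indicator g y ∂μ) := by
          rw [lintegral_const_mul _ (him.const_add _), lintegral_add_left measurable_const,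
            setLIntegral_const]
      _ ≤ 2 ^ q * D * c * V⁻¹ * (g x * V + V * T k x) := by gcongr; exact hT k
      _ = 2 ^ q * D * c * (V⁻¹ * V) * (g x + T k x) := by ring
      _ = _ := by rw [ENNReal.inv_mul_cancel hV0.ne' hV1.ne]; ring
  calc FF ρ μ Ω f q s x ≤ ∫⁻ y in (Ω ∩ ball ρ x 1) ∪ ⋃ k, Ω ∩ Ann k, Φ s y ∂μ :=
        lintegral_mono_set hcov
    _ ≤ ∫⁻ y in Ω ∩ ball ρ x 1, Φ s y ∂μ + ∫⁻ y in ⋃ k, Ω ∩ Ann k, Φ s y ∂μ :=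
        lintegral_union_le _ _ _
    _ ≤ FF ρ μ Ω f q s₀ x + ∑' k, ∫⁻ y in Ω ∩ Ann k, Φ s y ∂μ := by
        gcongr
        exact lintegral_iUnion_le _ _
    _ ≤ FF ρ μ Ω f q s₀ x + ∑' k, 2 ^ q * D * ((ENNReal.ofReal ((2 : ℝ) ^ k)) ^ (-(s * q)) *
          (g x + T k x)) := by
        gcongr with k
        exact hfar k
    _ = _ := by rw [ENNReal.tsum_mul_left]

lemma upper_int [Nonempty X] {ρ : X → X → ℝ} {μ : Measure X} {K₀ : ℝ} {L : ℝ≥0∞}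
    (hX : IsQuasiMetricMeasure ρ μ K₀) (hL : IsDoubling ρ μ L) {q : ℝ} (hq : 0 < q)
    {ω : X → ℝ≥0∞} (hω : Measurable ω)
    {t : ℝ} (ht : 1 ≤ t) {C : ℝ≥0∞} (hC : C < ∞) (hP : PC ρ μ ω t C) :
    ∃ C' : ℝ≥0∞, C' < ∞ ∧ ∀ (Ω : Set X) (f : X → ℝ) (s s₀ : ℝ),
      MeasurableSet Ω → Measurable f → 0 < s → s ≤ s₀ → s ≤ 1 →
      ENNReal.ofReal s ^ t * ∫⁻ x in Ω, FF ρ μ Ω f q s x ^ t * ω x ∂μ ≤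
        C' * (ENNReal.ofReal s ^ t * ∫⁻ x in Ω, FF ρ μ Ω f q s₀ x ^ t * ω x ∂μ +
          ∫⁻ x in Ω, (ENNReal.ofReal |f x| ^ q) ^ t * ω x ∂μ) := by
  have ht0 : 0 < t := by linarith
  obtain ⟨CT, hCT, hop⟩ := avg_op hX hL hω ht hC hP
  obtain ⟨C₁, hC₁, hpt⟩ := upper_ptw hX hL hq
  set M := ENNReal.ofReal ((1 + q * Real.log 2) / (q * Real.log 2)) with hM
  set E : ℝ≥0∞ := 2 ^ t with hE
  have hEt : E ≠ ∞ := ENNReal.rpow_ne_top_of_nonneg ht0.le (by simp)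
  have hE1 : 1 ≤ E := ENNReal.one_le_rpow (by norm_num) ht0
  have hCM : (C₁ * M) ^ t ≠ ∞ := ENNReal.rpow_ne_top_of_nonneg ht0.le
    (ENNReal.mul_ne_top hC₁.ne ENNReal.ofReal_ne_top)
  refine ⟨E * E * (1 + (C₁ * M) ^ t * (1 + CT)), ?_, fun Ω f s s₀ hΩ hf hs hss hs1 => ?_⟩
  · refine ENNReal.mul_lt_top (ENNReal.mul_lt_top hEt.lt_top hEt.lt_top) ?_
    refine ENNReal.add_lt_top.2 ⟨by simp, ENNReal.mul_lt_top hCM.lt_top ?_⟩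
    exact ENNReal.add_lt_top.2 ⟨by simp, hCT⟩
  set g : X → ℝ≥0∞ := fun y => ENNReal.ofReal |f y| ^ q with hg
  have hgm : Measurable g := (hf.abs.ennreal_ofReal).pow_const _
  have him : Measurable (Ω.indicator g) := hgm.indicator hΩ
  have hop' : ∀ k : ℕ, _ := fun k : ℕ => hop (2 ^ (k + 1)) (by positivity) (Ω.indicator g) him
  choose T hTm hT1 hT2 using hop'
  set N := ∫⁻ x in Ω, g x ^ t * ω x ∂μ with hN
  have hNi : ∫⁻ x, Ω.indicator g x ^ t * ω x ∂μ = N := by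
    rw [hN, ← lintegral_indicator hΩ]
    congr 1; ext x
    by_cases hx : x ∈ Ω <;> simp [hx, ENNReal.zero_rpow_of_pos ht0]
  simp only [hNi] at hT2
  set a : ℕ → ℝ≥0∞ := fun k => (ENNReal.ofReal ((2 : ℝ) ^ k)) ^ (-(s * q)) with ha
  set w := ∑' k, a k with hw
  set S := ENNReal.ofReal s with hS
  have hSw : S * w ≤ M := geo_upper one_lt_two hq hs hs1
  set G : X → ℝ≥0∞ := fun x => (C₁ * w * g x) ^ t + C₁ ^ t * w ^ (t - 1) * ∑' k, a k * T k x ^ t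
    with hG
  have hGm : Measurable G := by
    refine ((hgm.const_mul _).pow_const _).add ((Measurable.tsum fun k => ?_).const_mul _)
    exact ((hTm k).pow_const _).const_mul _
  have hF : ∀ x, FF ρ μ Ω f q s x ^ t * ω x ≤
      E * E * (FF ρ μ Ω f q s₀ x ^ t * ω x + G x * ω x) := by
    intro x
    have h1 := hpt Ω f T s s₀ x hΩ hf hs hss (fun k => hT1 k x)
    have h2 : C₁ * ∑' k : ℕ, a k * (g x + T k x) = C₁ * w * g x + C₁ * ∑' k, a k * T k x := by
      simp_rw [mul_add]
      rw [ENNReal.tsum_add, ENNReal.tsum_mul_right, mul_add, mul_assoc]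
    have h3 : (C₁ * ∑' k, a k * T k x) ^ t ≤ C₁ ^ t * w ^ (t - 1) * ∑' k, a k * T k x ^ t := by
      rw [ENNReal.mul_rpow_of_nonneg _ _ ht0.le, mul_assoc]
      gcongr
      exact jensen_tsum a _ ht
    have h4 : FF ρ μ Ω f q s x ^ t ≤ E * E * (FF ρ μ Ω f q s₀ x ^ t + G x) := by
      calc FF ρ μ Ω f q s x ^ t
          ≤ (FF ρ μ Ω f q s₀ x + (C₁ * w * g x + C₁ * ∑' k, a k * T k x)) ^ t := by
            rw [← h2]; exact ENNReal.rpow_le_rpow h1 ht0.le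
        _ ≤ E * (FF ρ μ Ω f q s₀ x ^ t + (C₁ * w * g x + C₁ * ∑' k, a k * T k x) ^ t) :=
            rpow_add_le' _ _ ht0.le
        _ ≤ E * (E * FF ρ μ Ω f q s₀ x ^ t +
              E * ((C₁ * w * g x) ^ t + (C₁ * ∑' k, a k * T k x) ^ t)) := by
            gcongr
            · exact le_mul_of_one_le_left' hE1
            · exact rpow_add_le' _ _ ht0.le
        _ ≤ E * (E * FF ρ μ Ω f q s₀ x ^ t + E * G x) := by
            gcongr
            exact add_le_add le_rfl h3
        _ = _ := by ring
    calc FF ρ μ Ω f q s x ^ t * ω x ≤ E * E * (FF ρ μ Ω f q s₀ x ^ t + G x) * ω x := by gcongr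
      _ = _ := by ring
  have hGi : ∫⁻ x in Ω, G x * ω x ∂μ ≤ (C₁ * w) ^ t * (1 + CT) * N := by
    have hwt : w ^ t = w ^ (t - 1) * w := by
      conv_lhs => rw [show t = (t - 1) + 1 by ring]
      rw [ENNReal.rpow_add_of_nonneg _ _ (by linarith) zero_le_one, ENNReal.rpow_one]
    have hgt : Measurable fun x => g x ^ t * ω x := (hgm.pow_const _).mul hω
    have hTt : ∀ k, Measurable fun x => T k x ^ t * ω x := fun k => ((hTm k).pow_const _).mul hω
    have e1 : ∀ x, G x * ω x = (C₁ * w) ^ t * (g x ^ t * ω x) +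
        C₁ ^ t * w ^ (t - 1) * ∑' k, a k * (T k x ^ t * ω x) := by
      intro x
      simp only [hG]
      rw [ENNReal.mul_rpow_of_nonneg _ _ ht0.le, add_mul, mul_assoc, mul_assoc _ _ (ω x),
        ← ENNReal.tsum_mul_right]
      simp_rw [mul_assoc]
    simp_rw [e1]
    rw [lintegral_add_left (hgt.const_mul _), lintegral_const_mul _ hgt,
      lintegral_const_mul _ (Measurable.tsum fun k => (hTt k).const_mul _),
      lintegral_tsum fun k => ((hTt k).const_mul _).aemeasurable]
    calc (C₁ * w) ^ t * N + C₁ ^ t * w ^ (t - 1) *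
          ∑' k, ∫⁻ x in Ω, a k * (T k x ^ t * ω x) ∂μ
        ≤ (C₁ * w) ^ t * N + C₁ ^ t * w ^ (t - 1) * ∑' k, a k * (CT * N) := by
          gcongr with k
          rw [lintegral_const_mul _ (hTt k)]
          gcongr
          exact (setLIntegral_le_lintegral _ _).trans (hT2 k)
      _ = _ := by
          rw [ENNReal.tsum_mul_right, ENNReal.mul_rpow_of_nonneg _ _ ht0.le, hwt]; ring
  have hSt : S ^ t * (C₁ * w) ^ t ≤ (C₁ * M) ^ t := by
    rw [← ENNReal.mul_rpow_of_nonneg _ _ ht0.le]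
    apply ENNReal.rpow_le_rpow _ ht0.le
    calc S * (C₁ * w) = C₁ * (S * w) := by ring
      _ ≤ _ := by gcongr
  set I₀ := ∫⁻ x in Ω, FF ρ μ Ω f q s₀ x ^ t * ω x ∂μ with hI₀
  calc S ^ t * ∫⁻ x in Ω, FF ρ μ Ω f q s x ^ t * ω x ∂μ
      ≤ S ^ t * ∫⁻ x in Ω, E * E * (FF ρ μ Ω f q s₀ x ^ t * ω x + G x * ω x) ∂μ := by
        refine mul_le_mul_right (lintegral_mono hF) _
    _ = S ^ t * (E * E * (I₀ + ∫⁻ x in Ω, G x * ω x ∂μ)) := by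
        rw [lintegral_const_mul' _ _ (ENNReal.mul_ne_top hEt hEt),
          lintegral_add_right (g := fun x => G x * ω x) _ (hGm.mul hω)]
    _ ≤ S ^ t * (E * E * (I₀ + (C₁ * w) ^ t * (1 + CT) * N)) := by gcongr
    _ = E * E * (S ^ t * I₀ + S ^ t * (C₁ * w) ^ t * ((1 + CT) * N)) := by ring
    _ ≤ E * E * (S ^ t * I₀ + (C₁ * M) ^ t * ((1 + CT) * N)) := by gcongr
    _ ≤ E * E * ((1 + (C₁ * M) ^ t * (1 + CT)) * (S ^ t * I₀) +
          (1 + (C₁ * M) ^ t * (1 + CT)) * N) := by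
        refine mul_le_mul_right (add_le_add ?_ ?_) _
        · exact le_mul_of_one_le_left' le_self_add
        · rw [← mul_assoc]; refine mul_le_mul_left ?_ _; exact le_add_self
    _ = _ := by ring

lemma annuli {ρ : X → X → ℝ} {μ : Measure X} {K₀ : ℝ} {L : ℝ≥0∞}
    (hX : IsQuasiMetricMeasure ρ μ K₀) (hL : IsDoubling ρ μ L) (hWRD : WRD ρ μ)
    {Ω : Set X} (hWMD : WMD ρ μ Ω) :
    ∃ (x₀ : X) (Λ R₁ : ℝ) (D : ℝ≥0∞), 1 < Λ ∧ 0 < R₁ ∧ D < ∞ ∧ ∀ r, R₁ ≤ r →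
      μ (ball ρ x₀ (Λ * r)) ≤ D * μ ((Ω ∩ ball ρ x₀ (Λ * r)) \ ball ρ x₀ r) := by
  have hK := hX.one_le
  obtain ⟨x₀, lam, C, hlam, hC, hr⟩ := hWRD
  obtain ⟨x₁, C₀, hC₀, -, hm⟩ := hWMD
  set C' := (1 + C) / 2 with hC'
  have hC'1 : 1 < C' := by rw [hC']; linarith
  have h1 : ENNReal.ofReal C' < liminf (fun r : ℝ => μ (ball ρ x₀ (lam * r)) / μ (ball ρ x₀ r))
      atTop := lt_of_lt_of_le ((ENNReal.ofReal_lt_ofReal_iff (by linarith)).2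
        (by rw [hC']; linarith)) hr
  have h2 : ENNReal.ofReal (C₀ / 2) < liminf (fun r : ℝ => μ (ball ρ x₁ r ∩ Ω) / μ (ball ρ x₁ r))
      atTop := lt_of_lt_of_le ((ENNReal.ofReal_lt_ofReal_iff hC₀).2 (by linarith)) hm
  obtain ⟨r₀, hr₀⟩ := eventually_atTop.1 (eventually_lt_of_lt_liminf h1)
  obtain ⟨r₁, hr₁⟩ := eventually_atTop.1 (eventually_lt_of_lt_liminf h2)
  obtain ⟨m, hm4⟩ := pow_unbounded_of_one_lt (4 / C₀) hC'1
  have hlm : 1 ≤ lam ^ m := one_le_pow₀ hlam.le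
  set P := 2 * K₀ * lam ^ m with hP
  have hP2 : 2 ≤ P := by rw [hP]; nlinarith
  set Λ := 2 * K₀ * P with hΛ
  have hΛ2 : 2 ≤ Λ := by rw [hΛ]; nlinarith
  obtain ⟨D', h1D', hD', hd'⟩ := doubling_const hL (K₀ * (1 + 2 * K₀))
  set c := ENNReal.ofReal (C₀ / 4) with hc
  have hc0 : c ≠ 0 := by rw [hc]; simp; linarith
  have hct : c ≠ ∞ := ENNReal.ofReal_ne_top
  set R₁ := max (max r₀ r₁) (max 1 (ρ x₀ x₁)) with hR₁
  refine ⟨x₀, Λ, R₁, D' * c⁻¹, by linarith, ?_, ENNReal.mul_lt_top hD' (by simp [hc0, pos_iff_ne_zero]), ?_⟩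
  · exact lt_of_lt_of_le one_pos ((le_max_left _ _).trans (le_max_right _ _))
  intro r hr
  have hrr₀ : r₀ ≤ r := ((le_max_left _ _).trans (le_max_left _ _)).trans hr
  have hrr₁ : r₁ ≤ r := ((le_max_right _ _).trans (le_max_left _ _)).trans hr
  have hr1 : 1 ≤ r := ((le_max_left _ _).trans (le_max_right _ _)).trans hr
  have hrd : ρ x₀ x₁ ≤ r := ((le_max_right _ _).trans (le_max_right _ _)).trans hr
  have hiter : ∀ k : ℕ, ENNReal.ofReal (C' ^ k) * μ (ball ρ x₀ r) ≤ μ (ball ρ x₀ (lam ^ k * r)) := by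
    intro k
    induction k with
    | zero => simp
    | succ k ih =>
      have hk : 1 ≤ lam ^ k := one_le_pow₀ hlam.le
      have hk' : r ≤ lam ^ k * r := by nlinarith
      obtain ⟨p0, -, p1⟩ := hL.2.2 x₀ (lam ^ k * r) (by linarith)
      have := hr₀ (lam ^ k * r) (hrr₀.trans hk')
      have := (ENNReal.le_div_iff_mul_le (Or.inl p0.ne') (Or.inl p1.ne)).1 this.le
      calc ENNReal.ofReal (C' ^ (k + 1)) * μ (ball ρ x₀ r)
          = ENNReal.ofReal C' * (ENNReal.ofReal (C' ^ k) * μ (ball ρ x₀ r)) := by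
            rw [pow_succ', ENNReal.ofReal_mul (by linarith), mul_assoc]
        _ ≤ ENNReal.ofReal C' * μ (ball ρ x₀ (lam ^ k * r)) := by gcongr
        _ ≤ _ := this
        _ = _ := by congr 2; ring
  have hPr : r ≤ P * r := by nlinarith
  set V := μ (ball ρ x₁ (P * r)) with hV
  obtain ⟨hV0, -, hV1⟩ := hL.2.2 x₁ (P * r) (by linarith)
  have hs1 : ball ρ x₀ (lam ^ m * r) ⊆ ball ρ x₁ (P * r) := by
    refine ball_sub hX (a := lam ^ m * r) ?_ (by rw [hP]; linarith)
    rw [hX.symm]; nlinarith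
  have hs2 : ball ρ x₁ (P * r) ⊆ ball ρ x₀ (Λ * r) :=
    ball_sub hX (a := P * r) (by linarith) (by rw [hΛ]; linarith)
  have hs3 : ball ρ x₀ (Λ * r) ⊆ ball ρ x₁ (K₀ * (1 + 2 * K₀) * (P * r)) := by
    refine ball_sub hX (a := P * r) ?_ (by rw [hΛ]; linarith)
    rw [hX.symm]; linarith
  have hB : μ (ball ρ x₀ r) ≤ c * V := by
    have e1 : 1 ≤ c * ENNReal.ofReal (C' ^ m) := by
      rw [hc, ← ENNReal.ofReal_mul (by linarith), ← ENNReal.ofReal_one]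
      apply ENNReal.ofReal_le_ofReal
      rw [div_lt_iff₀ hC₀] at hm4
      linarith
    calc μ (ball ρ x₀ r) ≤ (c * ENNReal.ofReal (C' ^ m)) * μ (ball ρ x₀ r) :=
          le_mul_of_one_le_left' e1
      _ = c * (ENNReal.ofReal (C' ^ m) * μ (ball ρ x₀ r)) := by ring
      _ ≤ c * V := by gcongr; exact (hiter m).trans (measure_mono hs1)
  have hΩV : c * V + c * V ≤ μ (ball ρ x₁ (P * r) ∩ Ω) := by
    have := hr₁ (P * r) (hrr₁.trans hPr)
    have := (ENNReal.le_div_iff_mul_le (Or.inl hV0.ne') (Or.inl hV1.ne)).1 this.le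
    refine le_trans (le_of_eq ?_) this
    rw [← add_mul, hc, ← ENNReal.ofReal_add (by linarith) (by linarith)]
    congr 2; ring
  have hcV : c * V ≤ μ ((Ω ∩ ball ρ x₀ (Λ * r)) \ ball ρ x₀ r) := by
    have e1 : μ (ball ρ x₁ (P * r) ∩ Ω) ≤
        μ ((Ω ∩ ball ρ x₀ (Λ * r)) \ ball ρ x₀ r) + c * V := by
      calc μ (ball ρ x₁ (P * r) ∩ Ω)
          ≤ μ (((Ω ∩ ball ρ x₀ (Λ * r)) \ ball ρ x₀ r) ∪ ball ρ x₀ r) := by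
            apply measure_mono
            rintro y ⟨hy1, hy2⟩
            by_cases hy : y ∈ ball ρ x₀ r
            · exact Or.inr hy
            · exact Or.inl ⟨⟨hy2, hs2 hy1⟩, hy⟩
        _ ≤ _ := (measure_union_le _ _).trans (by gcongr)
    exact (ENNReal.add_le_add_iff_right (ENNReal.mul_ne_top hct hV1.ne)).1 (hΩV.trans e1)
  calc μ (ball ρ x₀ (Λ * r)) ≤ D' * V := (measure_mono hs3).trans (hd' x₁ (P * r) (by linarith))
    _ = D' * c⁻¹ * (c * V) := by
        rw [mul_assoc, ← mul_assoc c⁻¹, ENNReal.inv_mul_cancel hc0 hct, one_mul]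
    _ ≤ _ := by gcongr

lemma weight_subset {ρ : X → X → ℝ} {μ : Measure X} {K₀ : ℝ} {L : ℝ≥0∞}
    (hX : IsQuasiMetricMeasure ρ μ K₀) {ω : X → ℝ≥0∞}
    {t : ℝ} (ht : 1 ≤ t) {C : ℝ≥0∞} (hP : PC ρ μ ω t C) {x : X} {R : ℝ} (hR : 0 < R) {E : Set X}
    (hE : MeasurableSet E) (hEB : E ⊆ ball ρ x R) :
    μ E ^ t * ∫⁻ y in ball ρ x R, ω y ∂μ ≤ C * μ (ball ρ x R) ^ t * ∫⁻ y in E, ω y ∂μ := by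
  have ht0 : 0 < t := by linarith
  have h := hP x R hR (E.indicator fun _ => 1) (measurable_const.indicator hE)
  rw [lintegral_indicator hE, setLIntegral_const, Measure.restrict_eq_self μ hEB] at h
  · rw [one_mul] at h
    have e : ∀ y, (E.indicator (fun _ => (1 : ℝ≥0∞)) y) ^ t * ω y = E.indicator ω y := by
      intro y
      by_cases hy : y ∈ E <;> simp [hy, ENNReal.zero_rpow_of_pos ht0]
    simp_rw [e] at h
    refine h.trans (mul_le_mul_right ?_ _)
    exact (setLIntegral_le_lintegral _ _).trans (le_of_eq (lintegral_indicator hE _))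

lemma lower_ptw {ρ : X → X → ℝ} {μ : Measure X} {K₀ : ℝ} {L : ℝ≥0∞}
    (hX : IsQuasiMetricMeasure ρ μ K₀) (hL : IsDoubling ρ μ L)
    {Ω : Set X} (hΩ : MeasurableSet Ω) {q : ℝ} (hq : 0 < q)
    {ω : X → ℝ≥0∞}
    {t : ℝ} (ht : 1 ≤ t) {C : ℝ≥0∞} (hC : C < ∞) (hP : PC ρ μ ω t C)
    {x₀ : X} {Λ R₁ : ℝ} {D : ℝ≥0∞} (hΛ : 1 < Λ) (hR₁ : 0 < R₁) (hD : D < ∞)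
    (hann : ∀ r, R₁ ≤ r →
      μ (ball ρ x₀ (Λ * r)) ≤ D * μ ((Ω ∩ ball ρ x₀ (Λ * r)) \ ball ρ x₀ r))
    (hω0 : ∫⁻ y in ball ρ x₀ (Λ * R₁), ω y ∂μ ≠ 0) :
    ∃ C₃ : ℝ≥0∞, C₃ < ∞ ∧ ∀ f : X → ℝ, Measurable f →
      ∫⁻ x in Ω, (ENNReal.ofReal |f x| ^ q) ^ t * ω x ∂μ < ∞ →
      ∀ (R : ℝ) (ε : ℝ≥0∞), ε ≠ 0 → ∀ᶠ s in 𝓝[>] (0 : ℝ), ∀ x ∈ Ω ∩ ball ρ x₀ R,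
        ENNReal.ofReal |f x| ^ q ≤ C₃ * (ENNReal.ofReal s * FF ρ μ Ω f q s x) + C₃ * ε := by
  have hK := hX.one_le
  have ht0 : 0 < t := by linarith
  have hΛ0 : 0 < Λ := by linarith
  obtain ⟨D₂, h1D₂, hD₂, hd₂⟩ := doubling_const hL (K₀ * (1 + 2 * K₀))
  have h2q : (2 : ℝ≥0∞) ^ q ≠ ∞ := ENNReal.rpow_ne_top_of_nonneg hq.le (by simp)
  have hlog := Real.log_pos hΛ
  set θ := ENNReal.ofReal (1 / (q * Real.log Λ)) * 2⁻¹ with hθ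
  have hθ0 : θ ≠ 0 := by
    refine mul_ne_zero ?_ (by simp)
    have : 0 < 1 / (q * Real.log Λ) := by positivity
    simpa using this
  have hθt : θ ≠ ∞ := ENNReal.mul_ne_top ENNReal.ofReal_ne_top (by simp)
  set A := D * 2 ^ q with hA
  have hAt : A ≠ ∞ := ENNReal.mul_ne_top hD.ne h2q
  -- the sets
  set rr : ℕ → ℝ := fun n => Λ ^ n * R₁ with hrr
  have hrr1 : ∀ n, R₁ ≤ rr n := fun n => by
    have : 1 ≤ Λ ^ n := one_le_pow₀ hΛ.le
    simp only [hrr]; nlinarith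
  have hrr0 : ∀ n, 0 < rr n := fun n => lt_of_lt_of_le hR₁ (hrr1 n)
  have hrrs : ∀ n, Λ * rr n = rr (n + 1) := fun n => by simp only [hrr]; ring
  have hrrm : Monotone rr := monotone_nat_of_le_succ fun n => by
    rw [← hrrs]; nlinarith [hrr0 n]
  set B : ℕ → Set X := fun n => ball ρ x₀ (Λ * rr n) with hB
  set E : ℕ → Set X := fun n => (Ω ∩ B n) \ ball ρ x₀ (rr n) with hE
  have hBm : ∀ n, MeasurableSet (B n) := fun n => hX.measurableSet_ball _ _
  have hEm : ∀ n, MeasurableSet (E n) := fun n =>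
    (hΩ.inter (hBm n)).diff (hX.measurableSet_ball _ _)
  have hEB : ∀ n, E n ⊆ B n := fun n y hy => hy.1.2
  have hB0 : ∀ n, μ (B n) ≠ 0 := fun n => (hL.2.2 x₀ _ (mul_pos hΛ0 (hrr0 n))).1.ne'
  have hBt : ∀ n, μ (B n) ≠ ∞ := fun n => (hL.2.2 x₀ _ (mul_pos hΛ0 (hrr0 n))).2.2.ne
  have hBE : ∀ n, μ (B n) ≤ D * μ (E n) := fun n => hann _ (hrr1 n)
  have hEd : Pairwise (Function.onFun Disjoint E) := by
    have key : ∀ i j, i < j → Disjoint (E i) (E j) := by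
      intro i j hij
      refine Set.disjoint_left.2 fun y hy hy' => hy'.2 ?_
      refine ball_mono ρ x₀ ?_ hy.1.2
      rw [hrrs]; exact hrrm hij
    intro i j hij
    rcases lt_or_gt_of_ne hij with h | h
    · exact key i j h
    · exact (key j i h).symm
  set M := C * D ^ t with hM
  have hMt : M ≠ ∞ := ENNReal.mul_ne_top hC.ne (ENNReal.rpow_ne_top_of_nonneg ht0.le hD.ne)
  set wB : ℕ → ℝ≥0∞ := fun n => ∫⁻ y in B n, ω y ∂μ with hwB
  have hwE : ∀ n, wB n ≤ M * ∫⁻ y in E n, ω y ∂μ := by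
    intro n
    have h := weight_subset (L := L) hX ht hP (mul_pos hΛ0 (hrr0 n)) (hEm n) (hEB n)
    have hE0 : μ (E n) ≠ 0 := by
      intro h0
      have := hBE n
      rw [h0, mul_zero] at this
      exact hB0 n (le_antisymm this zero_le)
    have hEt : μ (E n) ≠ ∞ := ((measure_mono (hEB n)).trans_lt (hBt n).lt_top).ne
    have hE0' : μ (E n) ^ t ≠ 0 := by simp [hE0, hEt]
    have hEt' : μ (E n) ^ t ≠ ∞ := ENNReal.rpow_ne_top_of_nonneg ht0.le hEt
    rw [← ENNReal.mul_le_mul_iff_right hE0' hEt']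
    calc μ (E n) ^ t * wB n ≤ C * μ (B n) ^ t * ∫⁻ y in E n, ω y ∂μ := h
      _ ≤ C * (D * μ (E n)) ^ t * ∫⁻ y in E n, ω y ∂μ := by gcongr; exact hBE n
      _ = _ := by rw [ENNReal.mul_rpow_of_nonneg _ _ ht0.le, hM]; ring
  have hgrow : ∀ n : ℕ, (n : ℝ≥0∞) * wB 0 ≤ M * wB n := by
    intro n
    induction n with
    | zero => simp
    | succ n ih =>
      have hBB : B n ⊆ B (n + 1) := ball_mono ρ x₀ (by
        rw [hrrs, hrrs]; exact hrrm (by omega))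
      have hB0n : B 0 ⊆ B (n + 1) := ball_mono ρ x₀ (by
        rw [hrrs, hrrs]; exact hrrm (by omega))
      have hdis : Disjoint (B n) (E (n + 1)) := by
        refine Set.disjoint_left.2 fun y hy hy' => hy'.2 ?_
        rw [← hrrs]; exact hy
      have h1 : wB n + ∫⁻ y in E (n + 1), ω y ∂μ ≤ wB (n + 1) := by
        rw [← lintegral_union (hEm (n + 1)) hdis]
        exact lintegral_mono_set (union_subset hBB (hEB _))
      calc ((n + 1 : ℕ) : ℝ≥0∞) * wB 0 = n * wB 0 + wB 0 := by push_cast; ring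
        _ ≤ M * wB n + wB (n + 1) := add_le_add ih (lintegral_mono_set hB0n)
        _ ≤ M * wB n + M * ∫⁻ y in E (n + 1), ω y ∂μ := by gcongr; exact hwE _
        _ = M * (wB n + ∫⁻ y in E (n + 1), ω y ∂μ) := by ring
        _ ≤ _ := by gcongr
  have hw0 : wB 0 ≠ 0 := by simpa [hwB, hB, hrr] using hω0
  refine ⟨A * D₂ * θ⁻¹ + A, ENNReal.add_lt_top.2 ⟨ENNReal.mul_lt_top (ENNReal.mul_lt_top
    hAt.lt_top hD₂) (by simp [pos_iff_ne_zero, hθ0]), hAt.lt_top⟩, fun f hf hN R ε hε => ?_⟩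
  set g : X → ℝ≥0∞ := fun y => ENNReal.ofReal |f y| ^ q with hg
  have hgm : Measurable g := (hf.abs.ennreal_ofReal).pow_const _
  have him : Measurable (Ω.indicator g) := hgm.indicator hΩ
  set N := ∫⁻ x in Ω, g x ^ t * ω x ∂μ with hNd
  have hNi : ∫⁻ x, Ω.indicator g x ^ t * ω x ∂μ = N := by
    rw [hNd, ← lintegral_indicator hΩ]
    congr 1; ext x
    by_cases hx : x ∈ Ω <;> simp [hx, ENNReal.zero_rpow_of_pos ht0]
  -- smallness of the averages
  obtain ⟨n₁, hn₁⟩ : ∃ n₁ : ℕ, ∀ n, n₁ ≤ n → ∫⁻ y in E n, g y ∂μ ≤ ε * μ (B n) := by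
    have hεt : ε ^ t * wB 0 ≠ 0 := mul_ne_zero (by
      simp [ENNReal.rpow_eq_zero_iff, hε, not_lt.2 ht0.le]) hw0
    have hfin : M * (C * N) / (ε ^ t * wB 0) ≠ ∞ :=
      ENNReal.div_ne_top (ENNReal.mul_ne_top hMt (ENNReal.mul_ne_top hC.ne hN.ne)) hεt
    obtain ⟨n₁, hn₁⟩ := ENNReal.exists_nat_gt hfin
    refine ⟨n₁, fun n hn => ?_⟩
    by_contra hcon
    push Not at hcon
    have hle : ∫⁻ y in E n, g y ∂μ ≤ ∫⁻ y in B n, Ω.indicator g y ∂μ := by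
      calc ∫⁻ y in E n, g y ∂μ = ∫⁻ y in E n, Ω.indicator g y ∂μ := by
            refine setLIntegral_congr_fun (hEm n) fun y hy => ?_
            rw [indicator_of_mem hy.1.1]
        _ ≤ _ := lintegral_mono_set (hEB n)
    have hp := hP x₀ (Λ * rr n) (mul_pos hΛ0 (hrr0 n)) _ him
    have hμt0 : μ (B n) ^ t ≠ 0 := by simp [hB0, hBt]
    have hμt1 : μ (B n) ^ t ≠ ∞ := ENNReal.rpow_ne_top_of_nonneg ht0.le (hBt n)
    have h1 : ε ^ t * wB n ≤ C * N := by
      rw [← ENNReal.mul_le_mul_iff_right hμt0 hμt1]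
      calc μ (B n) ^ t * (ε ^ t * wB n) = (ε * μ (B n)) ^ t * wB n := by
            rw [ENNReal.mul_rpow_of_nonneg _ _ ht0.le]; ring
        _ ≤ (∫⁻ y in B n, Ω.indicator g y ∂μ) ^ t * wB n := by
            gcongr; exact hcon.le.trans hle
        _ ≤ C * μ (B n) ^ t * ∫⁻ y in B n, Ω.indicator g y ^ t * ω y ∂μ := hp
        _ ≤ C * μ (B n) ^ t * N := by
            gcongr; rw [← hNi]; exact setLIntegral_le_lintegral _ _
        _ = _ := by ring
    have h2 : (n : ℝ≥0∞) ≤ M * (C * N) / (ε ^ t * wB 0) := by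
      rw [ENNReal.le_div_iff_mul_le (Or.inl hεt)
        (Or.inr (ENNReal.mul_ne_top hMt (ENNReal.mul_ne_top hC.ne hN.ne)))]
      calc (n : ℝ≥0∞) * (ε ^ t * wB 0) = ε ^ t * (n * wB 0) := by ring
        _ ≤ ε ^ t * (M * wB n) := mul_le_mul_right (hgrow n) _
        _ = M * (ε ^ t * wB n) := by ring
        _ ≤ _ := by gcongr
    have h3 : (n₁ : ℝ≥0∞) ≤ n := by exact_mod_cast hn
    exact absurd (hn₁.trans_le (h3.trans h2)) (lt_irrefl _)
  obtain ⟨n₂, hn₂⟩ : ∃ n₂ : ℕ, R ≤ rr n₂ := by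
    obtain ⟨n, hn⟩ := pow_unbounded_of_one_lt (R / R₁) hΛ
    refine ⟨n, ?_⟩
    rw [div_lt_iff₀ hR₁] at hn
    exact hn.le
  set n₀ := max n₁ n₂ with hn₀
  set b := 2 * K₀ * Λ * rr n₀ with hb
  have hb0 : 0 < b := by have := hrr0 n₀; positivity
  have hev : ∀ᶠ s in 𝓝[>] (0 : ℝ), (2⁻¹ : ℝ≥0∞) ≤ ENNReal.ofReal b ^ (-(s * q)) := by
    have h1 : Tendsto (fun s : ℝ => ENNReal.ofReal (b ^ (-(s * q)))) (𝓝[>] (0 : ℝ)) (𝓝 1) := by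
      have : Tendsto (fun s : ℝ => b ^ (-(s * q))) (𝓝[>] (0 : ℝ)) (𝓝 (b ^ (-((0:ℝ) * q)))) := by
        apply tendsto_nhdsWithin_of_tendsto_nhds
        apply Continuous.tendsto
        exact Continuous.rpow continuous_const (by fun_prop) (fun _ => Or.inl hb0.ne')
      simp only [zero_mul, neg_zero, Real.rpow_zero] at this
      simpa using ENNReal.tendsto_ofReal this
    filter_upwards [h1.eventually (lt_mem_nhds (a := (2⁻¹ : ℝ≥0∞)) (by simp))] with s hs
    rw [ENNReal.ofReal_rpow_of_pos hb0]
    exact hs.le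
  filter_upwards [hev, self_mem_nhdsWithin] with s hsb hs0
  rintro x ⟨hxΩ, hxR⟩
  have hs : 0 < s := hs0
  have hsq : 0 < s * q := by positivity
  set H := g x - A * ε with hH
  set J : ℕ → ℝ≥0∞ := fun n => ∫⁻ y in E n, ENNReal.ofReal |f x - f y| ^ q ∂μ with hJ
  have hJm : Measurable fun y => ENNReal.ofReal |f x - f y| ^ q :=
    ((hf.const_sub _).abs.ennreal_ofReal).pow_const _
  have hHJ : ∀ n, n₀ ≤ n → H ≤ A * (J n * (μ (B n))⁻¹) := by
    intro n hn
    have h1 : g x * μ (B n) ≤ A * J n + A * ε * μ (B n) := by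
      calc g x * μ (B n) ≤ g x * (D * μ (E n)) := by gcongr; exact hBE n
        _ = D * ∫⁻ y in E n, g x ∂μ := by rw [setLIntegral_const]; ring
        _ ≤ D * ∫⁻ y in E n, 2 ^ q * (ENNReal.ofReal |f x - f y| ^ q + g y) ∂μ := by
            refine mul_le_mul_right (lintegral_mono fun y => ?_) _
            have := rpow_add_le' (ENNReal.ofReal |f x - f y|) (ENNReal.ofReal |f y|) hq.le
            refine le_trans (ENNReal.rpow_le_rpow ?_ hq.le) this
            rw [← ENNReal.ofReal_add (abs_nonneg _) (abs_nonneg _)]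
            apply ENNReal.ofReal_le_ofReal
            calc |f x| = |(f x - f y) + f y| := by ring_nf
              _ ≤ _ := abs_add_le _ _
        _ = A * (J n + ∫⁻ y in E n, g y ∂μ) := by
            rw [lintegral_const_mul (2 ^ q)
              (f := fun y => ENNReal.ofReal |f x - f y| ^ q + g y) (hJm.add hgm),
              lintegral_add_left hJm, hA]; ring
        _ ≤ A * (J n + ε * μ (B n)) := by
            gcongr; exact hn₁ n ((le_max_left _ _).trans hn)
        _ = _ := by ring
    rw [hH, tsub_le_iff_right]
    calc g x = g x * μ (B n) * (μ (B n))⁻¹ := by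
          rw [mul_assoc, ENNReal.mul_inv_cancel (hB0 n) (hBt n), mul_one]
      _ ≤ (A * J n + A * ε * μ (B n)) * (μ (B n))⁻¹ := by gcongr
      _ = A * (J n * (μ (B n))⁻¹) + A * ε * (μ (B n) * (μ (B n))⁻¹) := by ring
      _ = _ := by rw [ENNReal.mul_inv_cancel (hB0 n) (hBt n), mul_one]
  set a : ℕ → ℝ≥0∞ := fun n => ENNReal.ofReal (Λ ^ n) ^ (-(s * q)) with ha
  set β := ENNReal.ofReal b ^ (-(s * q)) with hβ
  have hD₂0 : D₂ ≠ 0 := (zero_lt_one.trans_le h1D₂).ne'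
  have hint : ∀ n : ℕ, J (n₀ + n) * (μ (B (n₀ + n)))⁻¹ * (β * a n) ≤
      D₂ * ∫⁻ y in E (n₀ + n), ENNReal.ofReal |f x - f y| ^ q /
      (U ρ μ x y * ENNReal.ofReal (ρ x y) ^ (s * q)) ∂μ := by
    intro n
    set k := n₀ + n with hk
    have hxr : ρ x₀ x ≤ rr k := (le_of_lt hxR).trans (hn₂.trans (hrrm (by omega)))
    have hbk : b * Λ ^ n = 2 * K₀ * Λ * rr k := by
      simp only [hb, hrr, hk, pow_add]; ring
    have hΛn : (0 : ℝ) < Λ ^ n := by positivity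
    set c := D₂ * μ (B k) * ENNReal.ofReal (b * Λ ^ n) ^ (s * q) with hc
    have hrk := hrr0 k
    have hpt : ∀ y ∈ E k, ENNReal.ofReal |f x - f y| ^ q * c⁻¹ ≤ ENNReal.ofReal |f x - f y| ^ q /
      (U ρ μ x y * ENNReal.ofReal (ρ x y) ^ (s * q)) := by
      intro y hy
      rw [← div_eq_mul_inv]
      apply ENNReal.div_le_div_left
      have hy1 : ρ x₀ y < Λ * rr k := hy.1.2
      have hρ : ρ x y ≤ 2 * K₀ * Λ * rr k := by
        have h1 := hX.triangle x x₀ y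
        rw [hX.symm x x₀] at h1
        have h2 : ρ x₀ x + ρ x₀ y ≤ 2 * (Λ * rr k) := by nlinarith
        nlinarith
      have hU : U ρ μ x y ≤ D₂ * μ (B k) := by
        refine (min_le_left _ _).trans ?_
        refine le_trans (measure_mono ?_) (hd₂ x₀ (Λ * rr k) (by positivity))
        refine ball_sub hX hxr ?_
        have h3 : rr k ≤ Λ * rr k := by nlinarith
        calc K₀ * (rr k + ρ x y) ≤ K₀ * (Λ * rr k + 2 * K₀ * Λ * rr k) := by gcongr
          _ = _ := by ring
      rw [hc]
      gcongr
      rw [hbk]; exact hρ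
    have hcinv : c⁻¹ = D₂⁻¹ * (μ (B k))⁻¹ * (β * a n) := by
      have h0 : D₂ * μ (B k) ≠ 0 := mul_ne_zero hD₂0 (hB0 k)
      have h1 : D₂ * μ (B k) ≠ ∞ := ENNReal.mul_ne_top hD₂.ne (hBt k)
      rw [hc, ENNReal.mul_inv (Or.inl h0) (Or.inl h1),
        ENNReal.mul_inv (Or.inl hD₂0) (Or.inl hD₂.ne), ← ENNReal.rpow_neg,
        ENNReal.ofReal_mul hb0.le, ENNReal.mul_rpow_of_ne_top ENNReal.ofReal_ne_top
          ENNReal.ofReal_ne_top]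
    calc J k * (μ (B k))⁻¹ * (β * a n)
        = (D₂ * D₂⁻¹) * (J k * (μ (B k))⁻¹ * (β * a n)) := by
          rw [ENNReal.mul_inv_cancel hD₂0 hD₂.ne, one_mul]
      _ = D₂ * (J k * c⁻¹) := by rw [hcinv]; ring
      _ = D₂ * ∫⁻ y in E k, ENNReal.ofReal |f x - f y| ^ q * c⁻¹ ∂μ := by
          rw [lintegral_mul_const _ hJm]
      _ ≤ _ := mul_le_mul_right (setLIntegral_mono' (hEm k) hpt) _
  have hsum : H * (β * ∑' n, a n) ≤ A * D₂ * FF ρ μ Ω f q s x := by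
    calc H * (β * ∑' n, a n) = ∑' n, H * (β * a n) := by
          rw [ENNReal.tsum_mul_left, ENNReal.tsum_mul_left]
      _ ≤ ∑' n, A * (D₂ * ∫⁻ y in E (n₀ + n), ENNReal.ofReal |f x - f y| ^ q /
            (U ρ μ x y * ENNReal.ofReal (ρ x y) ^ (s * q)) ∂μ) := by
          refine ENNReal.tsum_le_tsum fun n => ?_
          calc H * (β * a n) ≤ A * (J (n₀ + n) * (μ (B (n₀ + n)))⁻¹) * (β * a n) :=
                mul_le_mul_left (hHJ _ (by omega)) _
            _ = A * (J (n₀ + n) * (μ (B (n₀ + n)))⁻¹ * (β * a n)) := by ring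
            _ ≤ _ := mul_le_mul_right (hint n) _
      _ = A * D₂ * ∫⁻ y in ⋃ n, E (n₀ + n), ENNReal.ofReal |f x - f y| ^ q /
            (U ρ μ x y * ENNReal.ofReal (ρ x y) ^ (s * q)) ∂μ := by
          rw [ENNReal.tsum_mul_left, ENNReal.tsum_mul_left,
            lintegral_iUnion (fun n => hEm (n₀ + n)) (fun i j hij => hEd (by omega))]
          ring
      _ ≤ _ := by
          refine mul_le_mul_right (lintegral_mono_set ?_) _
          exact iUnion_subset fun n y hy => hy.1.1
  have hfin : H * θ ≤ A * D₂ * (ENNReal.ofReal s * FF ρ μ Ω f q s x) := by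
    calc H * θ ≤ H * ((ENNReal.ofReal s * ∑' n, a n) * β) := by
          refine mul_le_mul_right (mul_le_mul' (geo_lower hΛ hq hs) hsb) _
      _ = ENNReal.ofReal s * (H * (β * ∑' n, a n)) := by ring
      _ ≤ ENNReal.ofReal s * (A * D₂ * FF ρ μ Ω f q s x) := by gcongr
      _ = _ := by ring
  have hHle : H ≤ A * D₂ * θ⁻¹ * (ENNReal.ofReal s * FF ρ μ Ω f q s x) := by
    calc H = H * θ * θ⁻¹ := by rw [mul_assoc, ENNReal.mul_inv_cancel hθ0 hθt, mul_one]
      _ ≤ A * D₂ * (ENNReal.ofReal s * FF ρ μ Ω f q s x) * θ⁻¹ := by gcongr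
      _ = _ := by ring
  calc g x ≤ H + A * ε := le_tsub_add
    _ ≤ A * D₂ * θ⁻¹ * (ENNReal.ofReal s * FF ρ μ Ω f q s x) + A * ε := by gcongr
    _ ≤ _ := by
      gcongr
      · exact le_self_add
      · exact le_add_self

lemma lower_int {ρ : X → X → ℝ} {μ : Measure X} {K₀ : ℝ} {L : ℝ≥0∞}
    (hX : IsQuasiMetricMeasure ρ μ K₀) (hL : IsDoubling ρ μ L)
    (hWRD : WRD ρ μ) {Ω : Set X} (hΩ : MeasurableSet Ω) (hWMD : WMD ρ μ Ω) {q : ℝ} (hq : 0 < q)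
    {ω : X → ℝ≥0∞} (hω : Measurable ω)
    {t : ℝ} (ht : 1 ≤ t) {C : ℝ≥0∞} (hC : C < ∞) (hP : PC ρ μ ω t C) :
    ∃ C₃ : ℝ≥0∞, C₃ < ∞ ∧ ∀ f : X → ℝ, Measurable f →
      ∫⁻ x in Ω, (ENNReal.ofReal |f x| ^ q) ^ t * ω x ∂μ < ∞ →
      ∫⁻ x in Ω, (ENNReal.ofReal |f x| ^ q) ^ t * ω x ∂μ ≤
        liminf (fun s : ℝ => C₃ ^ t *
          (ENNReal.ofReal s ^ t * ∫⁻ x in Ω, FF ρ μ Ω f q s x ^ t * ω x ∂μ)) (𝓝[>] (0 : ℝ)) := by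
  have ht0 : 0 < t := by linarith
  obtain ⟨x₀, Λ, R₁, D, hΛ, hR₁, hD, hann⟩ := annuli hX hL hWRD hWMD
  have hΛR : 0 < Λ * R₁ := by positivity
  by_cases hω0 : ∫⁻ y in ball ρ x₀ (Λ * R₁), ω y ∂μ = 0
  · refine ⟨0, by simp, fun f hf hN => ?_⟩
    have h1 : ∀ m : ℕ, ∫⁻ y in ball ρ x₀ (Λ * R₁ + m), ω y ∂μ = 0 := by
      intro m
      have h := weight_subset (L := L) hX ht hP (x := x₀) (R := Λ * R₁ + m) (by positivity)
        (hX.measurableSet_ball x₀ (Λ * R₁)) (ball_mono ρ x₀ (by simp))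
      rw [hω0, mul_zero, nonpos_iff_eq_zero, mul_eq_zero] at h
      refine h.resolve_left ?_
      exact (ENNReal.rpow_pos (hL.2.2 x₀ _ hΛR).1 (hL.2.2 x₀ _ hΛR).2.2.ne).ne'
    have h2 : (⋃ m : ℕ, ball ρ x₀ (Λ * R₁ + m)) = univ := by
      refine eq_univ_of_forall fun y => ?_
      obtain ⟨m, hm⟩ := exists_nat_gt (ρ x₀ y)
      refine mem_iUnion.2 ⟨m, ?_⟩
      change ρ x₀ y < _
      linarith
    have h3 : ∫⁻ y, ω y ∂μ = 0 := by
      rw [← setLIntegral_univ, ← h2, ← nonpos_iff_eq_zero]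
      refine (lintegral_iUnion_le _ _).trans ?_
      simp [h1]
    rw [lintegral_eq_zero_iff hω] at h3
    have h4 : ∫⁻ x in Ω, (ENNReal.ofReal |f x| ^ q) ^ t * ω x ∂μ = 0 := by
      refine (lintegral_congr_ae ?_).trans lintegral_zero
      filter_upwards [ae_restrict_of_ae h3] with x hx
      simp only [hx, Pi.zero_apply, mul_zero]
    rw [h4]; exact zero_le
  obtain ⟨C₃, hC₃, hlow⟩ := lower_ptw hX hL hΩ hq ht hC hP hΛ hR₁ hD hann hω0
  refine ⟨C₃, hC₃, fun f hf hN => ?_⟩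
  set g : X → ℝ≥0∞ := fun x => ENNReal.ofReal |f x| ^ q with hg
  have hgm : Measurable g := by
    simp only [hg]; fun_prop
  set e : ℕ → ℝ≥0∞ := fun k => ((k : ℝ≥0∞) + 1)⁻¹ with he
  have he0 : ∀ k, e k ≠ 0 := fun k => by simp [he]
  have het : Tendsto (fun k => C₃ * e k) atTop (𝓝 0) := by
    have : Tendsto e atTop (𝓝 0) := by
      have h := (tendsto_add_atTop_iff_nat 1).2 ENNReal.tendsto_inv_nat_nhds_zero
      refine h.congr fun k => ?_
      simp [he]
    simpa using ENNReal.Tendsto.const_mul this (Or.inr hC₃.ne)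
  set φ : ℕ → X → ℝ≥0∞ := fun k =>
    (ball ρ x₀ k).indicator fun x => (g x - C₃ * e k) ^ t * ω x with hφ
  have hφm : ∀ k, Measurable (φ k) := fun k =>
    Measurable.indicator (by fun_prop) (hX.measurableSet_ball _ _)
  have hpt : ∀ x, g x ^ t * ω x ≤ liminf (fun k => φ k x) atTop := by
    intro x
    by_cases hgx : g x = 0
    · rw [hgx, ENNReal.zero_rpow_of_pos ht0, zero_mul]; exact zero_le
    have hgtop : g x ≠ ∞ := ENNReal.rpow_ne_top_of_nonneg hq.le ENNReal.ofReal_ne_top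
    have h1 : Tendsto (fun k => g x - C₃ * e k) atTop (𝓝 (g x)) := by
      have := ENNReal.Tendsto.sub (tendsto_const_nhds (x := g x)) het (Or.inl hgtop)
      simpa using this
    have h2 : Tendsto (fun k => (g x - C₃ * e k) ^ t * ω x) atTop (𝓝 (g x ^ t * ω x)) := by
      refine ENNReal.Tendsto.mul_const ((ENNReal.continuous_rpow_const.tendsto _).comp h1) ?_
      left
      exact (ENNReal.rpow_pos (pos_iff_ne_zero.2 hgx) hgtop).ne'
    have h3 : Tendsto (fun k => φ k x) atTop (𝓝 (g x ^ t * ω x)) := by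
      refine h2.congr' ?_
      obtain ⟨m, hm⟩ := exists_nat_gt (ρ x₀ x)
      filter_upwards [eventually_ge_atTop m] with k hk
      have : x ∈ ball ρ x₀ k := lt_of_lt_of_le hm (by exact_mod_cast hk)
      simp only [hφ, indicator_of_mem this]
    exact h3.liminf_eq.ge
  have hk : ∀ k, ∫⁻ x in Ω, φ k x ∂μ ≤ liminf (fun s : ℝ => C₃ ^ t *
      (ENNReal.ofReal s ^ t * ∫⁻ x in Ω, FF ρ μ Ω f q s x ^ t * ω x ∂μ)) (𝓝[>] (0 : ℝ)) := by
    intro k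
    refine le_liminf_of_le (by isBoundedDefault) ?_
    filter_upwards [hlow f hf hN k (e k) (he0 k)] with s hs
    rw [← mul_assoc, ← lintegral_const_mul' _ _ (ENNReal.mul_ne_top
      (ENNReal.rpow_ne_top_of_nonneg ht0.le hC₃.ne)
      (ENNReal.rpow_ne_top_of_nonneg ht0.le ENNReal.ofReal_ne_top))]
    refine setLIntegral_mono' hΩ fun x hx => ?_
    by_cases hxb : x ∈ ball ρ x₀ k
    · simp only [hφ, indicator_of_mem hxb]
      calc (g x - C₃ * e k) ^ t * ω x
          ≤ (C₃ * (ENNReal.ofReal s * FF ρ μ Ω f q s x)) ^ t * ω x := by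
            gcongr
            rw [tsub_le_iff_right]
            exact hs x ⟨hx, hxb⟩
        _ = _ := by
            rw [ENNReal.mul_rpow_of_nonneg _ _ ht0.le, ENNReal.mul_rpow_of_nonneg _ _ ht0.le]
            ring
    · simp only [hφ, indicator_of_notMem hxb]; exact zero_le
  calc ∫⁻ x in Ω, g x ^ t * ω x ∂μ ≤ ∫⁻ x in Ω, liminf (fun k => φ k x) atTop ∂μ :=
        lintegral_mono hpt
    _ ≤ liminf (fun k => ∫⁻ x in Ω, φ k x ∂μ) atTop := lintegral_liminf_le hφm
    _ ≤ _ := by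
        refine liminf_le_of_le (by isBoundedDefault) fun b hb => ?_
        obtain ⟨k, hkb⟩ := hb.exists
        exact hkb.trans (hk k)

lemma FF_add {ρ : X → X → ℝ} {μ : Measure X} (E : Set X) (f : X → ℝ) (q s a : ℝ) (x : X) :
    FF ρ μ E (fun x => f x + a) q s x = FF ρ μ E f q s x := by
  unfold FF
  simp only [add_sub_add_right_eq_sub]

lemma norm_sob {ρ : X → X → ℝ} {μ : Measure X} {ω : X → ℝ≥0∞} {Ω : Set X} {f : X → ℝ}
    {q r : ℝ} (hq : 0 < q) (hr : 0 < r) (s : ℝ) :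
    ENNReal.ofReal s ^ (1 / q) * wnorm μ ω r Ω (sob ρ μ Ω f q s) =
      (ENNReal.ofReal s ^ (r / q) * ∫⁻ x in Ω, FF ρ μ Ω f q s x ^ (r / q) * ω x ∂μ) ^ (1 / r) := by
  have h : wnorm μ ω r Ω (sob ρ μ Ω f q s) =
      (∫⁻ x in Ω, FF ρ μ Ω f q s x ^ (r / q) * ω x ∂μ) ^ (1 / r) := by
    unfold wnorm
    congr 1
    refine lintegral_congr fun x => ?_
    change (FF ρ μ Ω f q s x ^ (1 / q)) ^ r * ω x = _
    rw [← ENNReal.rpow_mul]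
    congr 2
    ring
  rw [h, ENNReal.mul_rpow_of_nonneg _ _ (by positivity), ← ENNReal.rpow_mul]
  congr 2
  field_simp

lemma norm_f {μ : Measure X} {ω : X → ℝ≥0∞} {Ω : Set X} {f : X → ℝ}
    {q r : ℝ} (hq : 0 < q) :
    wnorm μ ω r Ω (fun x => ENNReal.ofReal |f x|) =
      (∫⁻ x in Ω, (ENNReal.ofReal |f x| ^ q) ^ (r / q) * ω x ∂μ) ^ (1 / r) := by
  unfold wnorm
  congr 1
  refine lintegral_congr fun x => ?_
  rw [← ENNReal.rpow_mul]
  congr 2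
  field_simp

theorem statement12 [Nonempty X] (ρ : X → X → ℝ) (μ : Measure X) (K₀ : ℝ) (L : ℝ≥0∞)
    (hX : IsQuasiMetricMeasure ρ μ K₀) (hL : IsDoubling ρ μ L) (hWRD : WRD ρ μ)
    (Ω : Set X) (hΩm : MeasurableSet Ω) (hΩo : IsRhoOpen ρ Ω) (hWMD : WMD ρ μ Ω)
    (p q r : ℝ) (hq : 0 < q) (hqp : q ≤ p) (hpr : p ≤ r)
    (ω : X → ℝ≥0∞) (hω : Measurable ω)
    (hA : (r = p ∧ A1Const ρ μ ω < ∞) ∨ (p < r ∧ ApConst ρ μ ω (r / p) < ∞)) :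
    ∃ C C' : ℝ≥0, 0 < C ∧ 0 < C' ∧
      ∀ f : X → ℝ, Measurable f →
        (⨅ a : ℝ, wnorm μ ω r Ω fun x => ENNReal.ofReal |f x + a|) < ∞ →
        (∃ s₀ ∈ Set.Ioo (0:ℝ) 1, wnorm μ ω r Ω (sob ρ μ Ω f q s₀) < ∞) →
        (C : ℝ≥0∞) * (⨅ a : ℝ, wnorm μ ω r Ω fun x => ENNReal.ofReal |f x + a|) ≤
            liminf (fun s : ℝ => ENNReal.ofReal s ^ (1 / q) * wnorm μ ω r Ω (sob ρ μ Ω f q s))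
              (𝓝[>] (0:ℝ)) ∧
          limsup (fun s : ℝ => ENNReal.ofReal s ^ (1 / q) * wnorm μ ω r Ω (sob ρ μ Ω f q s))
              (𝓝[>] (0:ℝ)) ≤
            (C' : ℝ≥0∞) * (⨅ a : ℝ, wnorm μ ω r Ω fun x => ENNReal.ofReal |f x + a|) := by
  have hp : 0 < p := by linarith
  have hr : 0 < r := by linarith
  have hr1 : 0 < 1 / r := by positivity
  have ht : 1 ≤ r / q := (one_le_div hq).2 (hqp.trans hpr)
  have ht0 : 0 < r / q := by positivity
  obtain ⟨CP, hCP, hP⟩ : ∃ C : ℝ≥0∞, C < ∞ ∧ PC ρ μ ω (r / q) C := by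
    have hle : r / p ≤ r / q := by gcongr
    rcases hA with ⟨h1, h2⟩ | ⟨h1, h2⟩
    · have h := PC_of_A1 hL hω h2
      rcases h.mono one_pos ht with h'
      exact ⟨_, ENNReal.add_lt_top.2 ⟨h2, ENNReal.one_lt_top⟩, h'⟩
    · have h := PC_of_Ap hL hω ((one_lt_div hp).2 h1) h2
      rcases h.mono (by positivity) hle with h'
      exact ⟨_, ENNReal.add_lt_top.2 ⟨h2, ENNReal.one_lt_top⟩, h'⟩
  obtain ⟨C₃, hC₃, hlow⟩ := lower_int hX hL hWRD hΩm hWMD hq hω ht hCP hP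
  obtain ⟨C₄, hC₄, hup⟩ := upper_int hX hL hq hω ht hCP hP
  set M : ℝ≥0 := C₃.toNNReal + 1 with hM
  have hM0 : 0 < M := by positivity
  have hC₃M : C₃ ≤ M := by
    rw [hM, ENNReal.coe_add, ENNReal.coe_toNNReal hC₃.ne]; exact le_self_add
  set c : ℝ≥0 := (M ^ (r / q))⁻¹ with hc
  have hc0 : 0 < c := by positivity
  have hcM : (c : ℝ≥0∞) * C₃ ^ (r / q) ≤ 1 := by
    have h1 : C₃ ^ (r / q) ≤ ((M ^ (r / q) : ℝ≥0) : ℝ≥0∞) := by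
      rw [ENNReal.coe_rpow_of_nonneg _ ht0.le]
      exact ENNReal.rpow_le_rpow hC₃M ht0.le
    refine (mul_le_mul_right h1 _).trans ?_
    rw [← ENNReal.coe_mul, hc, inv_mul_cancel₀ (by positivity)]
    simp
  set M' : ℝ≥0 := C₄.toNNReal + 1 with hM'
  have hM'0 : 0 < M' := by positivity
  have hC₄M : C₄ ≤ M' := by
    rw [hM', ENNReal.coe_add, ENNReal.coe_toNNReal hC₄.ne]; exact le_self_add
  refine ⟨c ^ (1 / r), M' ^ (1 / r), NNReal.rpow_pos hc0, NNReal.rpow_pos hM'0,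
    fun f hf hfin hs₀ => ?_⟩
  simp_rw [norm_sob hq hr]
  set V : ℝ → ℝ≥0∞ := fun s =>
    ENNReal.ofReal s ^ (r / q) * ∫⁻ x in Ω, FF ρ μ Ω f q s x ^ (r / q) * ω x ∂μ with hV
  constructor
  · obtain ⟨a, ha⟩ := iInf_lt_iff.1 hfin
    have hna := norm_f (μ := μ) (ω := ω) (Ω := Ω) (f := fun x => f x + a) (r := r) hq
    rw [hna] at ha
    have hN := (ENNReal.rpow_lt_top_iff_of_pos hr1).1 ha
    have h1 := hlow (fun x => f x + a) (hf.add_const a) hN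
    simp only [FF_add] at h1
    set N := ∫⁻ x in Ω, (ENNReal.ofReal |f x + a| ^ q) ^ (r / q) * ω x ∂μ with hNd
    set F : ℝ≥0∞ → ℝ≥0∞ := fun z => ((c : ℝ≥0∞) * z) ^ (1 / r) with hF
    have hFm : Monotone F := fun x y hxy =>
      ENNReal.rpow_le_rpow (mul_le_mul_right hxy _) hr1.le
    have hFc : Continuous F :=
      ENNReal.continuous_rpow_const.comp (ENNReal.continuous_const_mul ENNReal.coe_ne_top)
    calc ((c ^ (1 / r) : ℝ≥0) : ℝ≥0∞) * (⨅ a : ℝ, wnorm μ ω r Ω fun x => ENNReal.ofReal |f x + a|)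
        ≤ ((c ^ (1 / r) : ℝ≥0) : ℝ≥0∞) * N ^ (1 / r) :=
          mul_le_mul_right ((iInf_le _ a).trans hna.le) _
      _ = F N := by
          rw [hF, ENNReal.coe_rpow_of_nonneg _ hr1.le]
          simp only
          rw [ENNReal.mul_rpow_of_nonneg _ _ hr1.le]
      _ ≤ F (liminf (fun s => C₃ ^ (r / q) * V s) (𝓝[>] (0 : ℝ))) := hFm h1
      _ = liminf (F ∘ fun s => C₃ ^ (r / q) * V s) (𝓝[>] (0 : ℝ)) :=
          hFm.map_liminf_of_continuousAt _ hFc.continuousAt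
      _ ≤ _ := by
          refine liminf_le_liminf (Eventually.of_forall fun s => ?_)
          refine ENNReal.rpow_le_rpow ?_ hr1.le
          rw [← mul_assoc]
          exact (mul_le_mul_left hcM _).trans (one_mul _).le
  · obtain ⟨s₀, hs₀, hI⟩ := hs₀
    rw [ENNReal.mul_iInf_of_ne (by simp [hM'0.ne']) ENNReal.coe_ne_top]
    refine le_iInf fun a => ?_
    have hna := norm_f (μ := μ) (ω := ω) (Ω := Ω) (f := fun x => f x + a) (r := r) hq
    rw [hna]
    set N := ∫⁻ x in Ω, (ENNReal.ofReal |f x + a| ^ q) ^ (r / q) * ω x ∂μ with hNd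
    set I₀ := ∫⁻ x in Ω, FF ρ μ Ω f q s₀ x ^ (r / q) * ω x ∂μ with hI₀
    have hI₀t : I₀ ≠ ∞ := by
      have h := norm_sob (ρ := ρ) (μ := μ) (ω := ω) (Ω := Ω) (f := f) hq hr s₀
      have h2 : (ENNReal.ofReal s₀ ^ (r / q) * I₀) ^ (1 / r) < ∞ := by
        rw [← h]
        exact ENNReal.mul_lt_top (ENNReal.rpow_lt_top_of_nonneg (by positivity)
          ENNReal.ofReal_ne_top) hI
      have h3 := (ENNReal.rpow_lt_top_iff_of_pos hr1).1 h2
      intro htop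
      rw [htop, ENNReal.mul_top] at h3
      · exact lt_irrefl _ h3
      · exact (ENNReal.rpow_pos (ENNReal.ofReal_pos.2 hs₀.1) ENNReal.ofReal_ne_top).ne'
    have hT : Tendsto (fun s : ℝ => ((M' : ℝ≥0∞) *
        (ENNReal.ofReal s ^ (r / q) * I₀ + N)) ^ (1 / r)) (𝓝[>] (0 : ℝ))
        (𝓝 (((M' : ℝ≥0∞) * N) ^ (1 / r))) := by
      have h1 : Tendsto (fun s : ℝ => ENNReal.ofReal s ^ (r / q)) (𝓝[>] (0 : ℝ)) (𝓝 0) := by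
        have hcont : Continuous fun s : ℝ => ENNReal.ofReal s ^ (r / q) :=
          ENNReal.continuous_rpow_const.comp ENNReal.continuous_ofReal
        have := (hcont.tendsto 0).mono_left (nhdsWithin_le_nhds (s := Ioi (0 : ℝ)))
        simpa [ENNReal.zero_rpow_of_pos ht0] using this
      have h2 := ENNReal.Tendsto.mul_const h1 (Or.inr hI₀t)
      have h3 := h2.add (tendsto_const_nhds (x := N))
      rw [zero_mul, zero_add] at h3
      exact (ENNReal.continuous_rpow_const.tendsto _).comp
        (ENNReal.Tendsto.const_mul h3 (Or.inr ENNReal.coe_ne_top))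
    calc limsup (fun s => V s ^ (1 / r)) (𝓝[>] (0 : ℝ))
        ≤ limsup (fun s : ℝ => ((M' : ℝ≥0∞) *
        (ENNReal.ofReal s ^ (r / q) * I₀ + N)) ^ (1 / r)) (𝓝[>] (0 : ℝ)) := by
          refine limsup_le_limsup ?_
          have hev : ∀ᶠ s in 𝓝[>] (0 : ℝ), s < s₀ :=
            nhdsWithin_le_nhds (Iio_mem_nhds hs₀.1)
          filter_upwards [hev, self_mem_nhdsWithin] with s hs hs0
          refine ENNReal.rpow_le_rpow ?_ hr1.le
          have h := hup Ω (fun x => f x + a) s s₀ hΩm (hf.add_const a) hs0 hs.le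
            (hs.le.trans hs₀.2.le)
          simp only [FF_add] at h
          exact h.trans (mul_le_mul_left hC₄M _)
      _ = ((M' : ℝ≥0∞) * N) ^ (1 / r) := hT.limsup_eq
      _ = _ := by
          rw [ENNReal.mul_rpow_of_nonneg _ _ hr1.le, ENNReal.coe_rpow_of_nonneg _ hr1.le]
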